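/- Let {σ,τ} be any of the nine pairs of patterns {123,213}, {132,213}, {132,231}, {132,312}, {213,231}, {213,312}, {231,312}, {231,321}, {312,321}. Then for every positive integer n and every Ferrers board F ∈ F_n, the number of matchings of shape F avoiding both σ and τ equals 2^{n − r(F)}, where r(F) is the number of returns of the border path D_F. In particular, all nine pairs are shape-Wilf-equivalent. -/

import Mathlib

/-! ### Patterns of length 3 and 4 as permutations (0-indexed values) -/

def p123 : Equiv.Perm (Fin 3) :=
  ⟨![0,1,2], ![0,1,2], by intro x; fin_cases x <;> rfl, by intro x; fin_cases x <;> rfl⟩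
def p132 : Equiv.Perm (Fin 3) :=
  ⟨![0,2,1], ![0,2,1], by intro x; fin_cases x <;> rfl, by intro x; fin_cases x <;> rfl⟩
def p213 : Equiv.Perm (Fin 3) :=
  ⟨![1,0,2], ![1,0,2], by intro x; fin_cases x <;> rfl, by intro x; fin_cases x <;> rfl⟩
def p231 : Equiv.Perm (Fin 3) :=
  ⟨![1,2,0], ![2,0,1], by intro x; fin_cases x <;> rfl, by intro x; fin_cases x <;> rfl⟩
def p312 : Equiv.Perm (Fin 3) :=
  ⟨![2,0,1], ![1,2,0], by intro x; fin_cases x <;> rfl, by intro x; fin_cases x <;> rfl⟩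
def p321 : Equiv.Perm (Fin 3) :=
  ⟨![2,1,0], ![2,1,0], by intro x; fin_cases x <;> rfl, by intro x; fin_cases x <;> rfl⟩
def p1342 : Equiv.Perm (Fin 4) :=
  ⟨![0,2,3,1], ![0,3,1,2], by intro x; fin_cases x <;> rfl, by intro x; fin_cases x <;> rfl⟩
def p1324 : Equiv.Perm (Fin 4) :=
  ⟨![0,2,1,3], ![0,2,1,3], by intro x; fin_cases x <;> rfl, by intro x; fin_cases x <;> rfl⟩

/-! ### Perfect matchings of `[2n] = {1, …, 2n}` as finsets of pairs `(i,j)`, `i < j` -/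

/-- `M` is a perfect matching of `{1, …, 2n}`. -/
def IsPerfectMatching (n : ℕ) (M : Finset (ℕ × ℕ)) : Prop :=
  (∀ p ∈ M, p.1 < p.2 ∧ 1 ≤ p.1 ∧ p.2 ≤ 2 * n) ∧
  ∀ x, 1 ≤ x → x ≤ 2 * n → ∃! p, p ∈ M ∧ (p.1 = x ∨ p.2 = x)

/-- The matching `M` contains the pattern `τ ∈ S_k`: there are
`i_1 < i_2 < ⋯ < i_{2k}` with `(i_a, i_{2k+1-τ(a)}) ∈ M` for all `1 ≤ a ≤ k`
(written here 0-indexed). -/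
def MatchContains {k : ℕ} (τ : Equiv.Perm (Fin k)) (M : Finset (ℕ × ℕ)) : Prop :=
  ∃ f : Fin (2 * k) → ℕ, StrictMono f ∧
    ∀ a : Fin k,
      (f ⟨a.1, by have := a.isLt; omega⟩,
       f ⟨2 * k - 1 - (τ a).1, by have := (τ a).isLt; omega⟩) ∈ M

def MatchAvoids {k : ℕ} (τ : Equiv.Perm (Fin k)) (M : Finset (ℕ × ℕ)) : Prop :=
  ¬ MatchContains τ M

/-! ### Dyck paths as lists of booleans (`true` = east step, `false` = south step) -/

/-- A Dyck path of semilength `n`, from `(0,n)` to `(n,0)`, staying weakly above `y = n - x`. -/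
def IsDyckPath (n : ℕ) (t : List Bool) : Prop :=
  t.length = 2 * n ∧ t.count true = n ∧
  ∀ i, (t.take i).count false ≤ (t.take i).count true

/-- The height (distance above the diagonal) of the `i`-th vertex of the path `t`. -/
def pathHeight (t : List Bool) (i : ℕ) : ℤ :=
  ((t.take i).count true : ℤ) - ((t.take i).count false : ℤ)

/-- `s` lies weakly below `t` (for paths of the same semilength). -/
def WeaklyBelow (s t : List Bool) : Prop := ∀ i, pathHeight s i ≤ pathHeight t i

/-- The shape of a matching of `[2n]`: an east step for each opener, a south step for
each closer. -/
def shapeOf (n : ℕ) (M : Finset (ℕ × ℕ)) : List Bool :=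
  (List.range (2 * n)).map fun x => decide ((x + 1) ∈ M.image Prod.fst)

/-- Number of returns of a path: south steps ending on the diagonal. -/
def returnsOf (t : List Bool) : ℕ :=
  ((Finset.range t.length).filter fun i =>
    t[i]? = some false ∧ (t.take (i+1)).count true = (t.take (i+1)).count false).card

/-- Height sequence of a path, as natural numbers. -/
def hseq (t : List Bool) (i : ℕ) : ℕ := (t.take i).count true - (t.take i).count false

/-- `η(F)`: the number of indices `0 ≤ i ≤ 2n` with `h_i = 2`. -/
def etaOf (n : ℕ) (t : List Bool) : ℕ :=
  ((Finset.range (2 * n + 1)).filter fun i => hseq t i = 2).card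

/-! ### Full rook placements on Ferrers boards -/

/-- The square in column `c`, row `r` (both 1-indexed from the bottom left) belongs to the
Ferrers board with border path `t ∈ F_n`. -/
def InBoard (n : ℕ) (t : List Bool) (c r : ℕ) : Prop :=
  1 ≤ c ∧ 1 ≤ r ∧ ∃ i, c ≤ (t.take i).count true ∧ (t.take i).count false + r ≤ n

/-- `R` is a full rook placement on the Ferrers board with border path `t ∈ F_n`:
one rook in each of the `n` rows and `n` columns. -/
def IsFullRookPlacement (n : ℕ) (t : List Bool) (R : Finset (ℕ × ℕ)) : Prop :=
  (∀ p ∈ R, InBoard n t p.1 p.2) ∧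
  (∀ c, 1 ≤ c → c ≤ n → ∃! p, p ∈ R ∧ p.1 = c) ∧
  (∀ r, 1 ≤ r → r ≤ n → ∃! p, p ∈ R ∧ p.2 = r)

/-- The rooks of `R` lying in the rectangle `Γ(V_i)` determined by the `i`-th border vertex. -/
def rectRooks (n : ℕ) (t : List Bool) (R : Finset (ℕ × ℕ)) (i : ℕ) : Finset (ℕ × ℕ) :=
  R.filter fun p => p.1 ≤ (t.take i).count true ∧ p.2 + (t.take i).count false ≤ n

/-- Length of the longest increasing sequence (in both coordinates) in a finite point set. -/
def lisLen (S : Finset (ℕ × ℕ)) : ℕ :=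
  (S.powerset.filter fun T => ∀ p ∈ T, ∀ q ∈ T, p.1 < q.1 → p.2 < q.2).sup Finset.card

/-- The full rook placement `R` on the board with border `t ∈ F_n` contains the pattern `τ`:
some rectangle `Γ(V_i)` contains an occurrence of `τ`. -/
def PlacementContains {k : ℕ} (τ : Equiv.Perm (Fin k)) (n : ℕ) (t : List Bool)
    (R : Finset (ℕ × ℕ)) : Prop :=
  ∃ i ≤ 2 * n, ∃ f : Fin k → ℕ × ℕ,
    (∀ a, f a ∈ R ∧ (f a).1 ≤ (t.take i).count true ∧ (f a).2 + (t.take i).count false ≤ n) ∧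
    (∀ a b : Fin k, a < b → (f a).1 < (f b).1) ∧
    (∀ a b : Fin k, τ a < τ b → (f a).2 < (f b).2)

def PlacementAvoids {k : ℕ} (τ : Equiv.Perm (Fin k)) (n : ℕ) (t : List Bool)
    (R : Finset (ℕ × ℕ)) : Prop :=
  ¬ PlacementContains τ n t R

/-- `R` is board-minimal on the board with border `t`: every peak corner square holds a rook. -/
def BoardMinimal (n : ℕ) (t : List Bool) (R : Finset (ℕ × ℕ)) : Prop :=
  ∀ i, t[i]? = some true → t[i+1]? = some false →
    ((t.take (i+1)).count true, n - (t.take (i+1)).count false) ∈ R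

/-- Board-minimal full rook placements on boards of `F_n` avoiding the pattern `σ`,
recorded as pairs (border path, rook set). -/
def MinPlacements (n : ℕ) {k : ℕ} (σ : Equiv.Perm (Fin k)) :
    Set (List Bool × Finset (ℕ × ℕ)) :=
  {tR | IsDyckPath n tR.1 ∧ IsFullRookPlacement n tR.1 tR.2 ∧ BoardMinimal n tR.1 tR.2 ∧
        PlacementAvoids σ n tR.1 tR.2}

/-! ### Pattern avoidance in permutations -/

def PermContains {n k : ℕ} (τ : Equiv.Perm (Fin k)) (π : Equiv.Perm (Fin n)) : Prop :=
  ∃ f : Fin k → Fin n, StrictMono f ∧ ∀ a b : Fin k, τ a < τ b → π (f a) < π (f b)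

def PermAvoids {n k : ℕ} (τ : Equiv.Perm (Fin k)) (π : Equiv.Perm (Fin n)) : Prop :=
  ¬ PermContains τ π

/-- The full rook placement associated to a permutation of `[n]`. -/
def permPlacement {n : ℕ} (π : Equiv.Perm (Fin n)) : Finset (ℕ × ℕ) :=
  Finset.univ.image fun i : Fin n => ((i : ℕ) + 1, (π i : ℕ) + 1)

/-! ### Matchings with fixed points -/

/-- A (not necessarily perfect) matching on `{1, …, m}`: pairwise disjoint pairs. -/
def IsPartialMatching (m : ℕ) (M : Finset (ℕ × ℕ)) : Prop :=
  (∀ p ∈ M, p.1 < p.2 ∧ 1 ≤ p.1 ∧ p.2 ≤ m) ∧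
  ∀ p ∈ M, ∀ q ∈ M, p ≠ q → p.1 ≠ q.1 ∧ p.1 ≠ q.2 ∧ p.2 ≠ q.1 ∧ p.2 ≠ q.2

/-- The fixed points (unmatched vertices) of a matching on `{1, …, m}`. -/
def fixedPts (m : ℕ) (M : Finset (ℕ × ℕ)) : Finset ℕ :=
  (Finset.Icc 1 m).filter fun x => ∀ p ∈ M, p.1 ≠ x ∧ p.2 ≠ x

/-- The matched vertices of a matching on `{1, …, m}`. -/
def matchedSet (m : ℕ) (M : Finset (ℕ × ℕ)) : Finset ℕ :=
  (Finset.Icc 1 m).filter fun x => ∃ p ∈ M, p.1 = x ∨ p.2 = x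

/-- The rank (1-based) of `x` inside the finset `S`. -/
def rankIn (S : Finset ℕ) (x : ℕ) : ℕ := (S.filter (· ≤ x)).card

/-- The matching obtained by removing the fixed points and relabeling increasingly. -/
def relabeled (m : ℕ) (M : Finset (ℕ × ℕ)) : Finset (ℕ × ℕ) :=
  M.image fun p => (rankIn (matchedSet m M) p.1, rankIn (matchedSet m M) p.2)

/-! ### Set partitions -/

/-- `(i,j)` is an arc of the set partition `P` of `{1, …, n}`: `i < j` lie in a common block
with no element of that block strictly between them. -/
def PartArc {n : ℕ} (P : Finpartition (Finset.Icc 1 n)) (i j : ℕ) : Prop :=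
  i < j ∧ ∃ B ∈ P.parts, i ∈ B ∧ j ∈ B ∧ ∀ x ∈ B, ¬(i < x ∧ x < j)

/-- The set partition `P` contains the pattern `τ ∈ S_k`. -/
def PartContains {k n : ℕ} (τ : Equiv.Perm (Fin k)) (P : Finpartition (Finset.Icc 1 n)) : Prop :=
  ∃ f : Fin (2 * k) → ℕ, StrictMono f ∧
    ∀ a : Fin k,
      PartArc P (f ⟨a.1, by have := a.isLt; omega⟩)
        (f ⟨2 * k - 1 - (τ a).1, by have := (τ a).isLt; omega⟩)

def PartAvoids {k n : ℕ} (τ : Equiv.Perm (Fin k)) (P : Finpartition (Finset.Icc 1 n)) : Prop :=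
  ¬ PartContains τ P

/-! ### Counting functions -/

/-- `|M_n(τ)|`: the number of `τ`-avoiding perfect matchings of `[2n]`. -/
noncomputable def mcount {k : ℕ} (τ : Equiv.Perm (Fin k)) (n : ℕ) : ℕ :=
  {M : Finset (ℕ × ℕ) | IsPerfectMatching n M ∧ MatchAvoids τ M}.ncard

/-- `|M_n(σ,τ)|`: the number of perfect matchings of `[2n]` avoiding both `σ` and `τ`. -/
noncomputable def mcount2 {k : ℕ} (σ τ : Equiv.Perm (Fin k)) (n : ℕ) : ℕ :=
  {M : Finset (ℕ × ℕ) | IsPerfectMatching n M ∧ MatchAvoids σ M ∧ MatchAvoids τ M}.ncard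

/-- `|P_n(τ)|`: the number of `τ`-avoiding set partitions of `[n]`. -/
noncomputable def pcount {k : ℕ} (τ : Equiv.Perm (Fin k)) (n : ℕ) : ℕ :=
  Nat.card {P : Finpartition (Finset.Icc 1 n) // PartAvoids τ P}

/-- `|P_n(σ,τ)|`: the number of set partitions of `[n]` avoiding both `σ` and `τ`. -/
noncomputable def pcount2 {k : ℕ} (σ τ : Equiv.Perm (Fin k)) (n : ℕ) : ℕ :=
  Nat.card {P : Finpartition (Finset.Icc 1 n) // PartAvoids σ P ∧ PartAvoids τ P}

/-- `|S_n(τ)|`: the number of `τ`-avoiding permutations of `[n]`. -/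
noncomputable def scount {k : ℕ} (τ : Equiv.Perm (Fin k)) (n : ℕ) : ℕ :=
  Nat.card {π : Equiv.Perm (Fin n) // PermAvoids τ π}

/-- The nine pairs of length-3 patterns in shape-Wilf-equivalence class I. -/
def ClassIPair (σ τ : Equiv.Perm (Fin 3)) : Prop :=
  (σ = p123 ∧ τ = p213) ∨ (σ = p132 ∧ τ = p213) ∨ (σ = p132 ∧ τ = p231) ∨
  (σ = p132 ∧ τ = p312) ∨ (σ = p213 ∧ τ = p231) ∨ (σ = p213 ∧ τ = p312) ∨
  (σ = p231 ∧ τ = p312) ∨ (σ = p231 ∧ τ = p321) ∨ (σ = p312 ∧ τ = p321)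

set_option linter.unusedSimpArgs false

open Classical in
/-- Completions, processed left to right. -/
noncomputable def GG (B : ℕ → ℕ → ℕ → Prop) (w : ℕ → Bool) :
    ℕ → ℕ → List ℕ → (ℕ → ℕ → Prop) → Finset (Finset (ℕ × ℕ))
  | 0, _, o, _ => if o = [] then {∅} else ∅
  | m+1, i, o, R =>
    if w i then GG B w m (i+1) (o ++ [i]) R
    else ((Finset.range o.length).filter (fun j => ∀ x ∈ o, ¬ R (o.getD j 0) x)).biUnion
      fun j => (GG B w m (i+1) (o.eraseIdx j)
        (fun y x => (R y x ∨ B (o.getD j 0) y x) ∧ y < i ∧ x < i ∧ y ≠ o.getD j 0 ∧ x ≠ o.getD j 0)).image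
          (insert (o.getD j 0, i))

structure CC (B : ℕ → ℕ → ℕ → Prop) (w : ℕ → Bool) (m i : ℕ) (o : List ℕ)
    (R : ℕ → ℕ → Prop) (M : Finset (ℕ × ℕ)) : Prop where
  c1 : ∀ a b, (a, b) ∈ M → i ≤ b ∧ b < i + m ∧ w b = false ∧ a < b ∧ (a ∈ o ∨ (i ≤ a ∧ w a = true))
  c2 : ∀ a, a ∈ o → ∃ b, (a, b) ∈ M
  c2' : ∀ a, i ≤ a → a < i + m → w a = true → ∃ b, (a, b) ∈ M
  c3 : ∀ b, i ≤ b → b < i + m → w b = false → ∃ a, (a, b) ∈ M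
  c4 : ∀ a b b', (a, b) ∈ M → (a, b') ∈ M → b = b'
  c4' : ∀ a a' b, (a, b) ∈ M → (a', b) ∈ M → a = a'
  c5 : ∀ y y' x x', (y, y') ∈ M → (x, x') ∈ M → y' < x' → ¬ R y x
  c6 : ∀ p p' y y' x x', (p, p') ∈ M → (y, y') ∈ M → (x, x') ∈ M → y < p' → x < p' →
    p' < y' → y' < x' → ¬ B p y x


theorem CC.insert_step {B : ℕ → ℕ → ℕ → Prop} {w : ℕ → Bool} {m i : ℕ} {o o' : List ℕ}
    {R : ℕ → ℕ → Prop} {M : Finset (ℕ × ℕ)} {p : ℕ}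
    (hk : ∀ a, a ∈ o' ↔ a ≠ p ∧ a ∈ o) (hp : p ∈ o) (ho : ∀ a ∈ o, a < i) (hw : w i = false)
    (hR : ∀ y x, R y x → y < i ∧ x < i) (hall : ∀ x ∈ o, ¬ R p x)
    (h : CC B w m (i+1) o' (fun y x => (R y x ∨ B p y x) ∧ y < i ∧ x < i ∧ y ≠ p ∧ x ≠ p) M) :
    CC B w (m+1) i o R (insert (p, i) M) := by
  have hpi := ho p hp
  have h1 := h.c1
  have hlow : ∀ a b, (a, b) ∈ M → a < i → a ∈ o ∧ a ≠ p := by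
    intro a b hab hai
    obtain ⟨-, -, -, -, h2 | h2⟩ := h1 a b hab
    · have := (hk a).1 h2; exact ⟨this.2, this.1⟩
    · omega
  have hnp : ∀ b, (p, b) ∉ M := fun b hb => (hlow p b hb hpi).2 rfl
  have hni : ∀ a, (a, i) ∉ M := fun a ha => by have := (h1 a i ha).1; omega
  constructor
  · intro a b hab
    simp only [Finset.mem_insert, Prod.mk.injEq] at hab
    rcases hab with ⟨rfl, rfl⟩ | hab
    · exact ⟨le_rfl, by omega, hw, hpi, Or.inl hp⟩
    · obtain ⟨q1, q2, q3, q4, q5⟩ := h1 a b hab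
      refine ⟨by omega, by omega, q3, q4, ?_⟩
      rcases q5 with q5 | q5
      · exact Or.inl ((hk a).1 q5).2
      · exact Or.inr ⟨by omega, q5.2⟩
  · intro a ha
    by_cases hap : a = p
    · exact ⟨i, by simp [hap]⟩
    · obtain ⟨b, hb⟩ := h.c2 a ((hk a).2 ⟨hap, ha⟩)
      exact ⟨b, by simp [hb]⟩
  · intro a ha1 ha2 ha3
    have : a ≠ i := by rintro rfl; simp [hw] at ha3
    obtain ⟨b, hb⟩ := h.c2' a (by omega) (by omega) ha3
    exact ⟨b, by simp [hb]⟩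
  · intro b hb1 hb2 hb3
    rcases eq_or_lt_of_le hb1 with h2 | h2
    · exact ⟨p, by simp [h2]⟩
    · obtain ⟨a, ha⟩ := h.c3 b h2 (by omega) hb3
      exact ⟨a, by simp [ha]⟩
  · intro a b b' hb hb'
    simp only [Finset.mem_insert, Prod.mk.injEq] at hb hb'
    rcases hb with ⟨rfl, rfl⟩ | hb
    · rcases hb' with ⟨-, rfl⟩ | hb'
      · rfl
      · exact absurd hb' (hnp _)
    · rcases hb' with ⟨rfl, rfl⟩ | hb'
      · exact absurd hb (hnp _)
      · exact h.c4 a b b' hb hb'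
  · intro a a' b hb hb'
    simp only [Finset.mem_insert, Prod.mk.injEq] at hb hb'
    rcases hb with ⟨rfl, rfl⟩ | hb
    · rcases hb' with ⟨rfl, -⟩ | hb'
      · rfl
      · exact absurd hb' (hni _)
    · rcases hb' with ⟨rfl, rfl⟩ | hb'
      · exact absurd hb (hni _)
      · exact h.c4' a a' b hb hb'
  · intro y y' x x' hy hx hlt hyx
    obtain ⟨hyi, hxi⟩ := hR y x hyx
    simp only [Finset.mem_insert, Prod.mk.injEq] at hy hx
    rcases hx with ⟨rfl, rfl⟩ | hx
    · rcases hy with ⟨rfl, rfl⟩ | hy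
      · omega
      · have := (h1 _ _ hy).1; omega
    · have hx2 := hlow x x' hx hxi
      rcases hy with ⟨rfl, rfl⟩ | hy
      · exact hall x hx2.1 hyx
      · have hy2 := hlow y y' hy hyi
        exact h.c5 y y' x x' hy hx hlt ⟨Or.inl hyx, hyi, hxi, hy2.2, hx2.2⟩
  · intro q q' y y' x x' hq hy hx l1 l2 l3 l4 hBB
    have hq'i : i ≤ q' := by
      simp only [Finset.mem_insert, Prod.mk.injEq] at hq
      rcases hq with ⟨rfl, rfl⟩ | hq
      · exact le_rfl
      · have := (h1 _ _ hq).1; omega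
    have hyM : (y, y') ∈ M := by
      simp only [Finset.mem_insert, Prod.mk.injEq] at hy
      rcases hy with ⟨rfl, rfl⟩ | hy
      · omega
      · exact hy
    have hxM : (x, x') ∈ M := by
      simp only [Finset.mem_insert, Prod.mk.injEq] at hx
      rcases hx with ⟨rfl, rfl⟩ | hx
      · omega
      · exact hx
    simp only [Finset.mem_insert, Prod.mk.injEq] at hq
    rcases hq with ⟨rfl, rfl⟩ | hq
    · exact h.c5 y y' x x' hyM hxM l4 ⟨Or.inr hBB, l1, l2, (hlow y y' hyM l1).2, (hlow x x' hxM l2).2⟩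
    · exact h.c6 q q' y y' x x' hq hyM hxM l1 l2 l3 l4 hBB

theorem CC.erase_step {B : ℕ → ℕ → ℕ → Prop} {w : ℕ → Bool} {m i : ℕ} {o o' : List ℕ}
    {R : ℕ → ℕ → Prop} {M : Finset (ℕ × ℕ)} {p : ℕ}
    (hk : ∀ a, a ∈ o' ↔ a ≠ p ∧ a ∈ o) (ho : ∀ a ∈ o, a < i) (hw : w i = false)
    (h : CC B w (m+1) i o R M) (hp : (p, i) ∈ M) :
    CC B w m (i+1) o' (fun y x => (R y x ∨ B p y x) ∧ y < i ∧ x < i ∧ y ≠ p ∧ x ≠ p)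
      (M.erase (p, i)) := by
  have h1 := h.c1
  have hsub : ∀ a b, (a, b) ∈ M.erase (p, i) → (a, b) ∈ M ∧ a ≠ p ∧ b ≠ i := by
    intro a b hab
    rw [Finset.mem_erase] at hab
    refine ⟨hab.2, ?_, ?_⟩
    · rintro rfl
      exact hab.1 (by rw [h.c4 _ _ _ hab.2 hp])
    · rintro rfl
      exact hab.1 (by rw [h.c4' _ _ _ hab.2 hp])
  have hmk : ∀ a b, (a, b) ∈ M → (a ≠ p ∨ b ≠ i) → (a, b) ∈ M.erase (p, i) := by
    intro a b hab hne
    rw [Finset.mem_erase]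
    refine ⟨?_, hab⟩
    intro heq
    simp only [Prod.mk.injEq] at heq
    omega
  constructor
  · intro a b hab
    obtain ⟨hab, hap, hbi⟩ := hsub a b hab
    obtain ⟨q1, q2, q3, q4, q5⟩ := h1 a b hab
    refine ⟨by omega, by omega, q3, q4, ?_⟩
    rcases q5 with q5 | q5
    · exact Or.inl ((hk a).2 ⟨hap, q5⟩)
    · refine Or.inr ⟨?_, q5.2⟩
      have : a ≠ i := by rintro rfl; simp [hw] at q5
      omega
  · intro a ha
    obtain ⟨b, hb⟩ := h.c2 a ((hk a).1 ha).2
    exact ⟨b, hmk a b hb (Or.inl ((hk a).1 ha).1)⟩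
  · intro a ha1 ha2 ha3
    obtain ⟨b, hb⟩ := h.c2' a (by omega) (by omega) ha3
    have := (h1 a b hb)
    exact ⟨b, hmk a b hb (Or.inr (by omega))⟩
  · intro b hb1 hb2 hb3
    obtain ⟨a, ha⟩ := h.c3 b (by omega) (by omega) hb3
    exact ⟨a, hmk a b ha (Or.inr (by omega))⟩
  · intro a b b' hb hb'
    exact h.c4 a b b' (hsub _ _ hb).1 (hsub _ _ hb').1
  · intro a a' b hb hb'
    exact h.c4' a a' b (hsub _ _ hb).1 (hsub _ _ hb').1
  · rintro y y' x x' hy hx hlt ⟨h2 | h2, h3, h4, -⟩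
    · exact h.c5 y y' x x' (hsub _ _ hy).1 (hsub _ _ hx).1 hlt h2
    · have e1 := (hsub _ _ hy)
      have e2 := h1 _ _ e1.1
      exact h.c6 p i y y' x x' hp (hsub _ _ hy).1 (hsub _ _ hx).1 h3 h4 (by omega) hlt h2
  · intro q q' y y' x x' hq hy hx
    exact h.c6 q q' y y' x x' (hsub _ _ hq).1 (hsub _ _ hy).1 (hsub _ _ hx).1

theorem mem_GG (B : ℕ → ℕ → ℕ → Prop) (hB : ∀ p y, ¬ B p y y) (w : ℕ → Bool) (m : ℕ) : ∀ (i : ℕ) (o : List ℕ)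
    (R : ℕ → ℕ → Prop) (M : Finset (ℕ × ℕ)), (∀ a ∈ o, a < i) → o.Nodup →
    (∀ y, ¬ R y y) → (∀ y x, R y x → y < i ∧ x < i) →
    (M ∈ GG B w m i o R ↔ CC B w m i o R M) := by
  induction m with
  | zero =>
    intro i o R M ho hd hR hR2
    simp only [GG]
    constructor
    · intro h
      split_ifs at h with h0
      · simp at h; subst h; subst h0
        constructor <;> simp <;> intros <;> omega
      · simp at h
    · intro h
      have hM : M = ∅ := by
        apply Finset.eq_empty_of_forall_notMem
        rintro ⟨a, b⟩ hab
        have := h.c1 a b hab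
        omega
      subst hM
      have : o = [] := by
        apply List.eq_nil_iff_forall_not_mem.2
        intro a ha
        obtain ⟨b, hb⟩ := h.c2 a ha
        simp at hb
      simp [this]
  | succ m ih =>
    intro i o R M ho hd hR hR2
    simp only [GG]
    split_ifs with hw
    · rw [ih]
      · constructor
        · intro h
          constructor
          · intro a b hab
            have := h.c1 a b hab
            simp only [List.mem_append, List.mem_singleton] at this
            refine ⟨by omega, by omega, this.2.2.1, this.2.2.2.1, ?_⟩
            rcases this.2.2.2.2 with (h1 | h1) | h1
            · exact Or.inl h1
            · subst h1; exact Or.inr ⟨le_rfl, hw⟩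
            · exact Or.inr ⟨by omega, h1.2⟩
          · intro a ha
            exact h.c2 a (by simp [ha])
          · intro a h1 h2 h3
            rcases eq_or_lt_of_le h1 with h4 | h4
            · exact h.c2 a (by simp [h4])
            · exact h.c2' a h4 (by omega) h3
          · intro b h1 h2 h3
            rcases eq_or_lt_of_le h1 with h4 | h4
            · subst h4; simp [hw] at h3
            · exact h.c3 b h4 (by omega) h3
          · exact h.c4
          · exact h.c4'
          · exact h.c5
          · exact h.c6
        · intro h
          constructor
          · intro a b hab
            have := h.c1 a b hab
            have h7 : b ≠ i := by rintro rfl; simp [hw] at this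
            refine ⟨by omega, by omega, this.2.2.1, this.2.2.2.1, ?_⟩
            rcases this.2.2.2.2 with h1 | h1
            · exact Or.inl (by simp [h1])
            · rcases eq_or_lt_of_le h1.1 with h4 | h4
              · exact Or.inl (by simp [h4])
              · exact Or.inr ⟨by omega, h1.2⟩
          · intro a ha
            simp only [List.mem_append, List.mem_singleton] at ha
            rcases ha with h1 | h1
            · exact h.c2 a h1
            · subst h1; exact h.c2' a le_rfl (by omega) hw
          · intro a h1 h2 h3
            exact h.c2' a (by omega) (by omega) h3
          · intro b h1 h2 h3
            exact h.c3 b (by omega) (by omega) h3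
          · exact h.c4
          · exact h.c4'
          · exact h.c5
          · exact h.c6
      · intro a ha
        simp only [List.mem_append, List.mem_singleton] at ha
        rcases ha with h1 | h1
        · have := ho a h1; omega
        · omega
      · rw [List.nodup_append]
        refine ⟨hd, by simp, ?_⟩
        intro a ha b hb
        simp at hb
        have := ho a ha
        omega
      · exact hR
      · intro y x hyx
        have := hR2 y x hyx
        omega
    · simp only [Bool.not_eq_true] at hw
      simp only [Finset.mem_biUnion, Finset.mem_filter, Finset.mem_range, Finset.mem_image]
      have key : ∀ j < o.length, ∀ a, a ∈ o.eraseIdx j ↔ a ≠ o.getD j 0 ∧ a ∈ o := by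
        intro j hj a
        rw [← hd.erase_getElem j hj, hd.mem_erase_iff, List.getD_eq_getElem _ _ hj]
      have key2 : ∀ j < o.length, o.getD j 0 ∈ o := by
        intro j hj
        rw [List.getD_eq_getElem _ _ hj]; exact List.getElem_mem hj
      have ih' : ∀ j < o.length, ∀ M', M' ∈ GG B w m (i+1) (o.eraseIdx j)
        (fun y x => (R y x ∨ B (o.getD j 0) y x) ∧ y < i ∧ x < i ∧ y ≠ o.getD j 0 ∧ x ≠ o.getD j 0) ↔
        CC B w m (i+1) (o.eraseIdx j) (fun y x => (R y x ∨ B (o.getD j 0) y x) ∧ y < i ∧ x < i ∧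
          y ≠ o.getD j 0 ∧ x ≠ o.getD j 0) M' := by
        intro j hj M'
        apply ih
        · intro a ha
          have := ho a (List.mem_of_mem_eraseIdx ha)
          omega
        · exact hd.eraseIdx j
        · rintro y ⟨h1 | h1, -⟩
          · exact hR y h1
          · exact hB _ _ h1
        · rintro y x ⟨-, h1, h2, -⟩; omega
      constructor
      · rintro ⟨j, ⟨hj, hallow⟩, M', hM', rfl⟩
        rw [ih' j hj] at hM'
        have hk := key j hj
        have hk2 := key2 j hj
        exact hM'.insert_step hk hk2 ho hw hR2 hallow
      · intro h
        obtain ⟨p, hp⟩ := h.c3 i le_rfl (by omega) hw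
        have hp1 := h.c1 p i hp
        have hpo : p ∈ o := by
          rcases hp1.2.2.2.2 with h1 | h1
          · exact h1
          · omega
        obtain ⟨j, hj, hjp⟩ := List.mem_iff_getElem.1 hpo
        have hgd : o.getD j 0 = p := by rw [List.getD_eq_getElem _ _ hj, hjp]
        have hk := key j hj
        rw [hgd] at hk
        refine ⟨j, ⟨hj, ?_⟩, M.erase (p, i), ?_, ?_⟩
        · intro x hx
          rw [hgd]
          obtain ⟨x', hx'⟩ := h.c2 x hx
          by_cases hxp : x = p
          · subst hxp; exact hR x
          · refine h.c5 p i x x' hp hx' ?_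
            rcases eq_or_lt_of_le (h.c1 _ _ hx').1 with h2 | h2
            · rw [← h2] at hx'
              exact absurd (h.c4' _ _ _ hx' hp) hxp
            · exact h2
        · rw [ih' j hj, hgd]
          exact h.erase_step hk ho hw hp
        · rw [hgd]; exact Finset.insert_erase hp

open Classical in
theorem card_GG_down (B : ℕ → ℕ → ℕ → Prop) (hB : ∀ p y, ¬ B p y y) (w : ℕ → Bool) (m i : ℕ)
    (o : List ℕ) (R : ℕ → ℕ → Prop) (ho : ∀ a ∈ o, a < i) (hd : o.Nodup)
    (hR : ∀ y, ¬ R y y) (hw : w i = false) :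
    (GG B w (m+1) i o R).card =
      ∑ j ∈ (Finset.range o.length).filter (fun j => ∀ x ∈ o, ¬ R (o.getD j 0) x),
        (GG B w m (i+1) (o.eraseIdx j)
        (fun y x => (R y x ∨ B (o.getD j 0) y x) ∧ y < i ∧ x < i ∧ y ≠ o.getD j 0 ∧ x ≠ o.getD j 0)).card := by
  have hmem : ∀ j a b, ∀ M ∈ (GG B w m (i+1) (o.eraseIdx j)
        (fun y x => (R y x ∨ B (o.getD j 0) y x) ∧ y < i ∧ x < i ∧ y ≠ o.getD j 0 ∧ x ≠ o.getD j 0)),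
        (a, b) ∈ M → i + 1 ≤ b := by
    intro j a b M hM hab
    rw [mem_GG B hB] at hM
    · exact (hM.c1 a b hab).1
    · intro a ha
      have := ho a (List.mem_of_mem_eraseIdx ha)
      omega
    · exact hd.eraseIdx j
    · rintro y ⟨h1 | h1, -⟩
      · exact hR y h1
      · exact hB _ _ h1
    · rintro y x ⟨-, h1, h2, -⟩; omega
  simp only [GG, hw, Bool.false_eq_true, if_false]
  rw [Finset.card_biUnion]
  · apply Finset.sum_congr rfl
    intro j hj
    apply Finset.card_image_of_injOn
    intro M hM M' hM' heq
    have h1 : (o.getD j 0, i) ∉ M := fun h => by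
      have := hmem j _ _ M hM h; omega
    have h2 : (o.getD j 0, i) ∉ M' := fun h => by
      have := hmem j _ _ M' hM' h; omega
    rw [← Finset.erase_insert h1, heq, Finset.erase_insert h2]
  · intro j hj j' hj' hne
    change Disjoint _ _
    rw [Finset.disjoint_left]
    intro M hM hM'
    simp only [Finset.mem_image] at hM hM'
    obtain ⟨N, hN, rfl⟩ := hM
    obtain ⟨N', hN', heq⟩ := hM'
    have h1 : (o.getD j 0, i) ∈ insert (o.getD j' 0, i) N' := by rw [heq]; simp
    rw [Finset.mem_insert] at h1
    rcases h1 with h1 | h1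
    · simp only [Finset.coe_filter, Finset.mem_range, Set.mem_ofPred_eq] at hj hj'
      rw [List.getD_eq_getElem _ _ hj.1, List.getD_eq_getElem _ _ hj'.1] at h1
      simp only [Prod.mk.injEq, and_true] at h1
      exact hne ((hd.getElem_inj_iff).1 h1)
    · have := hmem j' _ _ N' hN' h1; omega

def GoodP (w : ℕ → Bool) : ℕ → ℕ → ℕ → Prop
  | 0, _, h => h = 0
  | m+1, i, h => if w i then GoodP w m (i+1) (h+1) else 1 ≤ h ∧ GoodP w m (i+1) (h-1)

def NN (w : ℕ → Bool) : ℕ → ℕ → ℕ → ℕ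
  | 0, _, _ => 0
  | m+1, i, h => if w i then NN w m (i+1) (h+1) else (if 2 ≤ h then 1 else 0) + NN w m (i+1) (h-1)

def skp (j a : ℕ) : ℕ := if a < j then a else a + 1

def DeadR (h : ℕ) (ρ : ℕ → ℕ → Prop) : Prop := ∃ a < h, ∃ b < h, ρ a b ∧ ρ b a

structure Mach (B : ℕ → ℕ → ℕ → Prop) (I : ℕ → (ℕ → ℕ → Prop) → ℚ → Prop) : Prop where
  irr : ∀ p y, ¬ B p y y
  inv : ∀ (f : ℕ → ℕ) (h : ℕ), (∀ a < h, ∀ b < h, (f a < f b ↔ a < b)) →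
    ∀ p < h, ∀ y < h, ∀ x < h, (B (f p) (f y) (f x) ↔ B p y x)
  start : I 0 (fun _ _ => False) 1
  zero : ∀ ρ W, I 0 ρ W → W = 1
  up : ∀ h ρ ρ' W, I h ρ W → (∀ a < h, ∀ b < h, (ρ' a b ↔ ρ a b)) →
    (∀ a, ¬ ρ' a h ∧ ¬ ρ' h a) → I (h+1) ρ' W
  down : ∀ h ρ W, I (h+1) ρ W → ∃ V : ℕ → ℚ,
    ∑ j ∈ Finset.range (h+1), V j = (if h = 0 then 1 else 2) * W ∧
    ∀ j < h+1, (V j = 0 ∧ ∃ b < h+1, ρ j b) ∨ ((∀ b < h+1, ¬ ρ j b) ∧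
      ∀ ρ' : ℕ → ℕ → Prop, (∀ a < h, ∀ b < h, (ρ' a b ↔
          (ρ (skp j a) (skp j b) ∨ B j (skp j a) (skp j b)))) →
        (I h ρ' (V j) ∨ (V j = 0 ∧ DeadR h ρ')))

theorem skp_lt {h j a : ℕ} (ha : a < h) : skp j a < h + 1 := by unfold skp; split_ifs <;> omega

theorem skp_ne (j a : ℕ) : skp j a ≠ j := by unfold skp; split_ifs <;> omega

theorem skp_lt_iff (j a b : ℕ) : skp j a < skp j b ↔ a < b := by
  unfold skp; split_ifs <;> omega

theorem skp_surj {h j b : ℕ} (hb : b < h + 1) (hj : j < h + 1) (hne : b ≠ j) :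
    ∃ a < h, skp j a = b := by
  by_cases hh : b < j
  · exact ⟨b, by omega, by simp [skp, hh]⟩
  · exact ⟨b - 1, by omega, by unfold skp; rw [if_neg (by omega)]; omega⟩

theorem eraseIdx_getD (o : List ℕ) (j a : ℕ) :
    (o.eraseIdx j).getD a 0 = o.getD (skp j a) 0 := by
  simp only [List.getD_eq_getElem?_getD, List.getElem?_eraseIdx, skp]
  split_ifs <;> rfl

theorem pw_getD {o : List ℕ} (hs : o.Pairwise (· < ·)) : ∀ a < o.length, ∀ b < o.length,
    (o.getD a 0 < o.getD b 0 ↔ a < b) := by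
  intro a ha b hb
  rw [List.getD_eq_getElem _ _ ha, List.getD_eq_getElem _ _ hb]
  have h := List.pairwise_iff_getElem.1 hs
  constructor
  · intro h1
    by_contra h2
    rcases eq_or_lt_of_le (not_lt.1 h2) with h3 | h3
    · subst h3; omega
    · have := h b a hb ha h3; omega
  · exact h a b ha hb

/-- the step facts about the new relation -/
theorem newR_iff {B : ℕ → ℕ → ℕ → Prop} {I} (hM : Mach B I) {i h : ℕ} {o : List ℕ}
    {R : ℕ → ℕ → Prop} (ho : ∀ a ∈ o, a < i) (hs : o.Pairwise (· < ·)) (hl : o.length = h + 1)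
    {j : ℕ} (hj : j < h + 1) : ∀ a < h, ∀ b < h,
    (((R (o.getD (skp j a) 0) (o.getD (skp j b) 0) ∨
        B (o.getD j 0) (o.getD (skp j a) 0) (o.getD (skp j b) 0)) ∧
        o.getD (skp j a) 0 < i ∧ o.getD (skp j b) 0 < i ∧
        o.getD (skp j a) 0 ≠ o.getD j 0 ∧ o.getD (skp j b) 0 ≠ o.getD j 0) ↔
      (R (o.getD (skp j a) 0) (o.getD (skp j b) 0) ∨ B j (skp j a) (skp j b))) := by
  intro a ha b hb
  have h1 := skp_lt (j := j) ha
  have h2 := skp_lt (j := j) hb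
  have hpw := pw_getD hs
  have hB := hM.inv (fun a => o.getD a 0) o.length hpw j (by omega) (skp j a) (by omega)
    (skp j b) (by omega)
  rw [hB]
  have hlt : ∀ c < o.length, o.getD c 0 < i := by
    intro c hc
    rw [List.getD_eq_getElem _ _ hc]; exact ho _ (List.getElem_mem hc)
  have hne : ∀ c, c < h → o.getD (skp j c) 0 ≠ o.getD j 0 := by
    intro c hc heq
    have h3 := skp_lt (j := j) hc
    have h4 := hpw (skp j c) (by omega) j (by omega)
    have h5 := hpw j (by omega) (skp j c) (by omega)
    have := skp_ne j c
    omega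
  constructor
  · exact fun h => h.1
  · exact fun h => ⟨h, hlt _ (by omega), hlt _ (by omega), hne a ha, hne b hb⟩

theorem allow_iff (o : List ℕ) (R : ℕ → ℕ → Prop) (p : ℕ) :
    (∀ x ∈ o, ¬ R p x) ↔ ∀ b < o.length, ¬ R p (o.getD b 0) := by
  constructor
  · intro h b hb
    rw [List.getD_eq_getElem _ _ hb]; exact h _ (List.getElem_mem hb)
  · intro h x hx
    obtain ⟨b, hb, rfl⟩ := List.mem_iff_getElem.1 hx
    have := h b hb
    rwa [List.getD_eq_getElem _ _ hb] at this

theorem dead_GG {B : ℕ → ℕ → ℕ → Prop} {I} (hM : Mach B I) (w : ℕ → Bool) (m i : ℕ)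
    (o : List ℕ) (R : ℕ → ℕ → Prop)
    (ho : ∀ a ∈ o, a < i) (hs : o.Pairwise (· < ·)) (hR : ∀ y, ¬ R y y) (hR2 : ∀ y x, R y x → y < i ∧ x < i)
    (hD : DeadR o.length (fun a b => R (o.getD a 0) (o.getD b 0))) :
    (GG B w m i o R).card = 0 := by
  rw [Finset.card_eq_zero]
  apply Finset.eq_empty_of_forall_notMem
  intro M hMem
  rw [mem_GG B hM.irr w m i o R M ho (hs.imp (fun h => ne_of_lt h)) hR hR2] at hMem
  obtain ⟨a, ha, b, hb, h1, h2⟩ := hD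
  rw [List.getD_eq_getElem _ _ ha, List.getD_eq_getElem _ _ hb] at h1 h2
  obtain ⟨a', ha'⟩ := hMem.c2 _ (List.getElem_mem ha)
  obtain ⟨b', hb'⟩ := hMem.c2 _ (List.getElem_mem hb)
  rcases lt_trichotomy a' b' with h | h | h
  · exact hMem.c5 _ _ _ _ ha' hb' h h1
  · subst h
    have := hMem.c4' _ _ _ ha' hb'
    rw [this] at h1
    exact hR _ h1
  · exact hMem.c5 _ _ _ _ hb' ha' h h2

theorem card_GG {B : ℕ → ℕ → ℕ → Prop} {I} (hM : Mach B I) (w : ℕ → Bool) (m : ℕ) :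
    ∀ (i : ℕ) (o : List ℕ) (R : ℕ → ℕ → Prop) (W : ℚ),
    (∀ a ∈ o, a < i) → o.Pairwise (· < ·) → (∀ y, ¬ R y y) → (∀ y x, R y x → y < i ∧ x < i) →
    GoodP w m i o.length → I o.length (fun a b => R (o.getD a 0) (o.getD b 0)) W →
    ((GG B w m i o R).card : ℚ) = 2 ^ (NN w m i o.length) * W := by
  induction m with
  | zero =>
    intro i o R W ho hs hR hR2 hG hI
    simp only [GoodP, List.length_eq_zero_iff] at hG
    subst hG
    have := hM.zero _ _ hI
    subst this
    simp [GG, NN]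
  | succ m ih =>
    intro i o R W ho hs hR hR2 hG hI
    by_cases hw : w i = true
    · simp only [GoodP, hw, if_true] at hG
      simp only [GG, NN, hw, if_true]
      have hl : (o ++ [i]).length = o.length + 1 := by simp
      rw [← hl] at hG ⊢
      apply ih
      · intro a ha
        simp only [List.mem_append, List.mem_singleton] at ha
        rcases ha with h1 | h1
        · have := ho a h1; omega
        · omega
      · rw [List.pairwise_append]
        refine ⟨hs, by simp, ?_⟩
        intro a ha b hb
        simp at hb
        have := ho a ha
        omega
      · exact hR
      · intro y x hyx
        have := hR2 y x hyx
        omega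
      · exact hG
      · rw [hl]
        apply hM.up _ _ _ _ hI
        · intro a ha b hb
          simp [List.getElem?_append_left ha, List.getElem?_append_left hb]
        · have : (o ++ [i]).getD o.length 0 = i := by simp
          intro a
          rw [this]
          exact ⟨fun h => by have := hR2 _ _ h; omega, fun h => by have := hR2 _ _ h; omega⟩
    · simp only [Bool.not_eq_true] at hw
      simp only [GoodP, hw, Bool.false_eq_true, if_false] at hG
      obtain ⟨hpos, hG⟩ := hG
      obtain ⟨h, hl⟩ : ∃ h, o.length = h + 1 := ⟨o.length - 1, by omega⟩
      rw [card_GG_down B hM.irr w m i o R ho (hs.imp (fun h => ne_of_lt h)) hR hw]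
      simp only [NN, hw, Bool.false_eq_true, if_false]
      rw [hl] at hI hG ⊢
      simp only [Nat.add_sub_cancel] at hG ⊢
      obtain ⟨V, hV, hstep⟩ := hM.down _ _ _ hI
      have hpow : (2:ℚ) ^ ((if 2 ≤ h + 1 then 1 else 0) + NN w m (i+1) h) * W =
          2 ^ (NN w m (i+1) h) * ∑ j ∈ Finset.range (h+1), V j := by
        rw [hV]
        by_cases h0 : h = 0
        · simp [h0]
        · rw [if_pos (by omega), if_neg h0, pow_add]; ring
      rw [hpow, Finset.mul_sum, Finset.sum_filter]
      push_cast
      apply Finset.sum_congr rfl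
      intro j hj
      rw [Finset.mem_range] at hj
      have hai := allow_iff o R (o.getD j 0)
      rw [hl] at hai
      have e1 : ∀ a ∈ o.eraseIdx j, a < i + 1 := by
        intro a ha
        have := ho a (List.mem_of_mem_eraseIdx ha)
        omega
      have e2 : (o.eraseIdx j).Pairwise (· < ·) := hs.sublist (List.eraseIdx_sublist o j)
      have e3 : ∀ y, ¬ ((R y y ∨ B (o.getD j 0) y y) ∧ y < i ∧ y < i ∧ y ≠ o.getD j 0 ∧ y ≠ o.getD j 0) := by
        rintro y ⟨h1 | h1, -⟩
        · exact hR y h1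
        · exact hM.irr _ _ h1
      have e4 : (o.eraseIdx j).length = h := by
        rw [List.length_eraseIdx_of_lt (by omega)]; omega
      rcases hstep j hj with ⟨hV0, b, hb, hb2⟩ | ⟨hal, hI'⟩
      · rw [if_neg]
        · simp [hV0]
        · intro hall; exact hai.1 hall b hb hb2
      · rw [if_pos (hai.2 hal)]
        rcases hI' (fun a b => (fun y x => (R y x ∨ B (o.getD j 0) y x) ∧ y < i ∧ x < i ∧
            y ≠ o.getD j 0 ∧ x ≠ o.getD j 0) ((o.eraseIdx j).getD a 0) ((o.eraseIdx j).getD b 0)) (by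
            intro a ha b hb
            simp only [eraseIdx_getD]
            exact newR_iff hM ho hs hl hj a ha b hb) with h1 | ⟨hV0, hD⟩
        · have := ih (i+1) (o.eraseIdx j) (fun y x => (R y x ∨ B (o.getD j 0) y x) ∧ y < i ∧ x < i ∧
            y ≠ o.getD j 0 ∧ x ≠ o.getD j 0) (V j) e1 e2 e3 (by
              rintro y x ⟨-, h1, h2, -⟩; omega) (by rw [e4]; exact hG) (by rw [e4]; exact h1)
          rw [e4] at this
          exact this
        · rw [dead_GG hM w m (i+1) (o.eraseIdx j) _ e1 e2 e3 (by
              rintro y x ⟨-, h1, h2, -⟩; omega) (by rw [e4]; exact hD), hV0]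
          simp

def B123 (p y x : ℕ) : Prop := x < y ∧ y < p
def B132 (p y x : ℕ) : Prop := x < p ∧ p < y
def B213 (p y x : ℕ) : Prop := y < x ∧ x < p
def B231 (p y x : ℕ) : Prop := y < p ∧ p < x
def B312 (p y x : ℕ) : Prop := p < x ∧ x < y
def B321 (p y x : ℕ) : Prop := p < y ∧ y < x

def B2 (B B' : ℕ → ℕ → ℕ → Prop) (p y x : ℕ) : Prop := B p y x ∨ B' p y x

def I0 (h : ℕ) (ρ : ℕ → ℕ → Prop) (W : ℚ) : Prop := W = 1 ∧ ∀ a < h, ∀ b < h, ¬ ρ a b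

theorem mach0 (B : ℕ → ℕ → ℕ → Prop) (irr : ∀ p y, ¬ B p y y)
    (inv : ∀ (f : ℕ → ℕ) (h : ℕ), (∀ a < h, ∀ b < h, (f a < f b ↔ a < b)) →
      ∀ p < h, ∀ y < h, ∀ x < h, (B (f p) (f y) (f x) ↔ B p y x))
    (u v : ℕ → ℕ) (huv : ∀ h, 1 ≤ h → u h < h + 1 ∧ v h < h + 1 ∧ u h ≠ v h)
    (h00 : u 0 = 0 ∧ v 0 = 0)
    (hgood : ∀ h j, j < h + 1 → (j = u h ∨ j = v h) → ∀ a < h, ∀ b < h, ¬ B j (skp j a) (skp j b))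
    (hbad : ∀ h j, j < h + 1 → ¬ (j = u h ∨ j = v h) → ∃ a < h, ∃ b < h,
      B j (skp j a) (skp j b) ∧ B j (skp j b) (skp j a)) : Mach B I0 where
  irr := irr
  inv := inv
  start := ⟨rfl, by simp⟩
  zero := fun ρ W h => h.1
  up := by
    rintro h ρ ρ' W ⟨h1, h2⟩ h3 h4
    refine ⟨h1, ?_⟩
    intro a ha b hb
    by_cases ha' : a = h
    · subst ha'; exact (h4 b).2
    · by_cases hb' : b = h
      · subst hb'; exact (h4 a).1
      · rw [h3 a (by omega) b (by omega)]; exact h2 a (by omega) b (by omega)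
  down := by
    rintro h ρ W ⟨rfl, h2⟩
    refine ⟨fun j => if j = u h ∨ j = v h then 1 else 0, ?_, ?_⟩
    · by_cases h0 : h = 0
      · subst h0; simp [h00]
      · rw [← Finset.sum_filter]
        have : (Finset.range (h+1)).filter (fun j => j = u h ∨ j = v h) = {u h, v h} := by
          ext j
          have := huv h (by omega)
          simp only [Finset.mem_filter, Finset.mem_range, Finset.mem_insert, Finset.mem_singleton]
          constructor
          · exact fun h => h.2
          · rintro (rfl | rfl) <;> simp [this]
        rw [this, Finset.sum_pair (huv h (by omega)).2.2]
        simp [h0]; norm_num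
    · intro j hj
      right
      refine ⟨fun b hb => h2 j hj b hb, ?_⟩
      intro ρ' hρ'
      by_cases hc : j = u h ∨ j = v h
      · left
        refine ⟨by simp [hc], ?_⟩
        intro a ha b hb
        rw [hρ' a ha b hb]
        rintro (h5 | h5)
        · exact h2 _ (skp_lt ha) _ (skp_lt hb) h5
        · exact hgood h j hj hc a ha b hb h5
      · right
        refine ⟨by simp [hc], ?_⟩
        obtain ⟨a, ha, b, hb, h5, h6⟩ := hbad h j hj hc
        exact ⟨a, ha, b, hb, (hρ' a ha b hb).2 (Or.inr h5), (hρ' b hb a ha).2 (Or.inr h6)⟩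

theorem mach_123_213 : Mach (B2 B123 B213) I0 := by
  apply mach0 _ _ _ (fun _ => 0) (fun h => if h = 0 then 0 else 1)
  · intro h hh; rw [if_neg (by omega : ¬ h = 0)]; omega
  · simp
  · intro h j hj hc a ha b hb
    simp only [B2, B123, B213, skp]
    split_ifs at * <;> omega
  · intro h j hj hc
    have : 2 ≤ j := by split_ifs at hc <;> omega
    refine ⟨0, by omega, 1, by omega, ?_⟩
    simp only [B2, B123, B213, skp]
    split_ifs <;> omega
  · simp only [B2, B123, B213]; omega
  · intro f h hf p hp y hy x hx
    simp only [B2, B123, B213, hf p hp y hy, hf y hy p hp, hf x hx p hp, hf p hp x hx,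
      hf x hx y hy, hf y hy x hx]

theorem mach_312_321 : Mach (B2 B312 B321) I0 := by
  apply mach0 _ _ _ (fun h => h) (fun h => h - 1)
  · intro h hh; omega
  · simp
  · intro h j hj hc a ha b hb
    simp only [B2, B312, B321, skp]
    split_ifs at * <;> omega
  · intro h j hj hc
    refine ⟨h-1, by omega, h-2, by omega, ?_⟩
    simp only [B2, B312, B321, skp]
    split_ifs <;> omega
  · simp only [B2, B312, B321]; omega
  · intro f h hf p hp y hy x hx
    simp only [B2, B312, B321, hf p hp y hy, hf y hy p hp, hf x hx p hp, hf p hp x hx,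
      hf x hx y hy, hf y hy x hx]

theorem mach_132_231 : Mach (B2 B132 B231) I0 := by
  apply mach0 _ _ _ (fun h => h) (fun h => 0)
  · intro h hh; omega
  · simp
  · intro h j hj hc a ha b hb
    simp only [B2, B132, B231, skp]
    split_ifs at * <;> omega
  · intro h j hj hc
    refine ⟨h-1, by omega, 0, by omega, ?_⟩
    simp only [B2, B132, B231, skp]
    split_ifs <;> omega
  · simp only [B2, B132, B231]; omega
  · intro f h hf p hp y hy x hx
    simp only [B2, B132, B231, hf p hp y hy, hf y hy p hp, hf x hx p hp, hf p hp x hx,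
      hf x hx y hy, hf y hy x hx]

theorem sum_half (k : ℕ) (h : ℕ) (hk : k ≤ h) :
    ∑ j ∈ Finset.range h, (if k ≤ j then (1/2 : ℚ)^j else 0) = 2 * ((1/2)^k - (1/2)^h) := by
  induction h, hk using Nat.le_induction with
  | base =>
    rw [Finset.sum_eq_zero]
    · ring
    · intro j hj
      rw [Finset.mem_range] at hj
      rw [if_neg (by omega)]
  | succ h hk ih =>
    rw [Finset.sum_range_succ, ih, if_pos hk]; ring

def I4 (h : ℕ) (ρ : ℕ → ℕ → Prop) (W : ℚ) : Prop :=
  ∃ k m, (k = 0 ∨ k < m) ∧ m ≤ h ∧ W = (1/2)^k ∧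
    ∀ a < h, ∀ b < h, (ρ a b ↔ (a < k ∧ a < b ∧ b < m))

theorem mach_213_231 : Mach (B2 B213 B231) I4 where
  irr := by simp only [B2, B213, B231]; omega
  inv := by
    intro f h hf p hp y hy x hx
    simp only [B2, B213, B231, hf p hp y hy, hf y hy p hp, hf x hx p hp, hf p hp x hx,
      hf x hx y hy, hf y hy x hx]
  start := ⟨0, 0, by simp⟩
  zero := by
    rintro ρ W ⟨k, m, h1, h2, rfl, -⟩
    have : k = 0 := by omega
    simp [this]
  up := by
    rintro h ρ ρ' W ⟨k, m, h1, h2, rfl, h3⟩ h4 h5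
    refine ⟨k, m, h1, by omega, rfl, ?_⟩
    intro a ha b hb
    by_cases ha' : a = h
    · subst ha'
      simp only [(h5 b).2, false_iff]; omega
    · by_cases hb' : b = h
      · subst hb'
        simp only [(h5 a).1, false_iff]; omega
      · rw [h4 a (by omega) b (by omega), h3 a (by omega) b (by omega)]
  down := by
    rintro h ρ W ⟨k, m, h1, h2, rfl, h3⟩
    refine ⟨fun j => if k ≤ j then (1/2)^(min j (h-1)) else 0, ?_, ?_⟩
    · by_cases h0 : h = 0
      · subst h0
        have : k = 0 := by omega
        simp [this]
      · rw [Finset.sum_range_succ, if_neg h0, if_pos (by omega),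
          Finset.sum_congr rfl (g := fun j => if k ≤ j then (1/2 : ℚ)^j else 0), sum_half k h (by omega)]
        · rw [min_eq_right (by omega)]
          obtain ⟨g, rfl⟩ : ∃ g, h = g + 1 := ⟨h - 1, by omega⟩
          simp only [Nat.add_sub_cancel]
          ring
        · intro j hj
          rw [Finset.mem_range] at hj
          rw [min_eq_left (by omega)]
    · intro j hj
      by_cases hc : k ≤ j
      · right
        refine ⟨fun b hb => by rw [h3 j hj b hb]; omega, ?_⟩
        intro ρ' hρ'
        left
        refine ⟨min j (h-1), h, by omega, le_rfl, by simp [hc], ?_⟩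
        intro a ha b hb
        rw [hρ' a ha b hb, h3 _ (skp_lt ha) _ (skp_lt hb)]
        simp only [B2, B213, B231, skp]
        split_ifs <;> omega
      · left
        refine ⟨by simp [hc], j + 1, by omega, ?_⟩
        rw [h3 j hj _ (by omega)]
        omega

def I5 (h : ℕ) (ρ : ℕ → ℕ → Prop) (W : ℚ) : Prop :=
  ∃ k m, k ≤ m ∧ m ≤ h ∧ W = (if k = m then (1/2)^(k-1) else (1/2)^k) ∧
    ∀ a < h, ∀ b < h, (ρ a b ↔ ((a < b ∧ b < k) ∨ (b < k ∧ k ≤ a ∧ a < m)))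

theorem mach_132_213 : Mach (B2 B132 B213) I5 where
  irr := by simp only [B2, B213, B132]; omega
  inv := by
    intro f h hf p hp y hy x hx
    simp only [B2, B213, B132, hf p hp y hy, hf y hy p hp, hf x hx p hp, hf p hp x hx,
      hf x hx y hy, hf y hy x hx]
  start := ⟨0, 0, by simp⟩
  zero := by
    rintro ρ W ⟨k, m, h1, h2, rfl, -⟩
    have : k = 0 := by omega
    simp [this]
  up := by
    rintro h ρ ρ' W ⟨k, m, h1, h2, rfl, h3⟩ h4 h5
    refine ⟨k, m, h1, by omega, rfl, ?_⟩
    intro a ha b hb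
    by_cases ha' : a = h
    · subst ha'
      simp only [(h5 b).2, false_iff]; omega
    · by_cases hb' : b = h
      · subst hb'
        simp only [(h5 a).1, false_iff]; omega
      · rw [h4 a (by omega) b (by omega), h3 a (by omega) b (by omega)]
  down := by
    rintro h ρ W ⟨k, m, h1, h2, rfl, h3⟩
    by_cases hA : k = m ∨ k = 0
    · have hW : (if k = m then (1/2 : ℚ)^(k-1) else (1/2)^k) = (1/2)^(k-1) := by
        split_ifs with h
        · rfl
        · have : k = 0 := by omega
          simp [this]
      rw [hW]
      refine ⟨fun j => if k - 1 ≤ j then (if j = h then (1/2)^(h-1) else (1/2)^j) else 0, ?_, ?_⟩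
      · by_cases h0 : h = 0
        · subst h0
          have : k - 1 = 0 := by omega
          simp [this]
        · rw [Finset.sum_range_succ, if_neg h0, if_pos (by omega), if_pos rfl,
            Finset.sum_congr rfl (g := fun j => if k - 1 ≤ j then (1/2 : ℚ)^j else 0),
            sum_half (k-1) h (by omega)]
          · obtain ⟨g, rfl⟩ : ∃ g, h = g + 1 := ⟨h - 1, by omega⟩
            simp only [Nat.add_sub_cancel]
            ring
          · intro j hj
            rw [Finset.mem_range] at hj
            rw [if_neg (by omega : ¬ j = h)]
      · intro j hj
        by_cases hc : k - 1 ≤ j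
        · right
          refine ⟨fun b hb => by rw [h3 j hj b hb]; omega, ?_⟩
          intro ρ' hρ'
          left
          refine ⟨j, h, by omega, le_rfl, ?_, ?_⟩
          · simp only [hc, if_true]
            split_ifs with h6
            · rw [h6]
            · rfl
          intro a ha b hb
          rw [hρ' a ha b hb, h3 _ (skp_lt ha) _ (skp_lt hb)]
          simp only [B2, B213, B132, skp]
          split_ifs <;> omega
        · left
          refine ⟨by simp [hc], k - 1, by omega, ?_⟩
          rw [h3 j hj _ (by omega)]
          omega
    · rw [if_neg (by omega)]
      refine ⟨fun j => if j = k - 1 then (1/2)^(k-1) else 0, ?_, ?_⟩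
      · rw [Finset.sum_ite_eq' , if_pos (by simp; omega), if_neg (by omega)]
        obtain ⟨g, rfl⟩ : ∃ g, k = g + 1 := ⟨k - 1, by omega⟩
        simp only [Nat.add_sub_cancel]
        ring
      · intro j hj
        by_cases hc : j = k - 1
        · right
          refine ⟨fun b hb => by rw [h3 j hj b hb]; omega, ?_⟩
          intro ρ' hρ'
          left
          refine ⟨k - 1, h, by omega, le_rfl, ?_, ?_⟩
          · simp only [hc, if_true]
            rw [if_neg (by omega)]
          intro a ha b hb
          rw [hρ' a ha b hb, h3 _ (skp_lt ha) _ (skp_lt hb)]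
          simp only [B2, B213, B132, skp]
          split_ifs <;> omega
        · by_cases hm : m ≤ j
          · right
            refine ⟨fun b hb => by rw [h3 j hj b hb]; omega, ?_⟩
            intro ρ' hρ'
            right
            refine ⟨by simp [hc], k - 1, by omega, k, by omega, ?_, ?_⟩
            · rw [hρ' _ (by omega) _ (by omega), h3 _ (skp_lt (by omega)) _ (skp_lt (by omega))]
              simp only [B2, B213, B132, skp]
              split_ifs <;> omega
            · rw [hρ' _ (by omega) _ (by omega), h3 _ (skp_lt (by omega)) _ (skp_lt (by omega))]
              simp only [B2, B213, B132, skp]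
              split_ifs <;> omega
          · left
            refine ⟨by simp [hc], ?_⟩
            by_cases hjk : j < k
            · refine ⟨k - 1, by omega, ?_⟩
              rw [h3 j hj _ (by omega)]
              omega
            · refine ⟨0, by omega, ?_⟩
              rw [h3 j hj _ (by omega)]
              omega

inductive J6 : ℕ → (ℕ → ℕ → Prop) → ℚ → Prop
  | nil (h : ℕ) : J6 h (fun _ _ => False) 1
  | push (h s e : ℕ) (ρ : ℕ → ℕ → Prop) (W : ℚ) (hJ : J6 s ρ W) (hse : s < e) (he : e ≤ h) :
      J6 h (fun a b => ρ a b ∨ (s ≤ b ∧ b < e ∧ (a < s ∨ (b < a ∧ a < e))))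
        (W * (1/2)^(e - max s 1))

theorem J6.supp {h ρ W} (hJ : J6 h ρ W) : ∀ a b, ρ a b → a < h ∧ b < h := by
  induction hJ with
  | nil h => simp
  | push h s e ρ W hJ hse he ih =>
    rintro a b (h1 | h1)
    · have := ih a b h1; omega
    · omega

theorem J6.mono {h ρ W} (hJ : J6 h ρ W) {h' : ℕ} (hh : h ≤ h') : J6 h' ρ W := by
  cases hJ with
  | nil h => exact J6.nil _
  | push _ s e ρ W hJ hse he => exact J6.push _ _ _ _ _ hJ hse (by omega)

def I6 (h : ℕ) (ρ : ℕ → ℕ → Prop) (W : ℚ) : Prop :=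
  ∃ ρ0, J6 h ρ0 W ∧ ∀ a < h, ∀ b < h, (ρ a b ↔ ρ0 a b)

theorem skp_supp {ρ : ℕ → ℕ → Prop} {s j : ℕ} (hs : ∀ a b, ρ a b → a < s ∧ b < s) (hj : s ≤ j)
    (a b : ℕ) : ρ (skp j a) (skp j b) ↔ ρ a b := by
  by_cases ha : a < j
  · by_cases hb : b < j
    · simp [skp, ha, hb]
    · constructor
      · intro h1; have := hs _ _ h1; simp only [skp, if_neg hb] at this; omega
      · intro h1; have := hs _ _ h1; omega
  · constructor
    · intro h1; have := hs _ _ h1; simp only [skp, if_neg ha] at this; omega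
    · intro h1; have := hs _ _ h1; omega

theorem sum_two (k : ℕ) (h : ℕ) (hk : k ≤ h) :
    ∑ j ∈ Finset.range h, (if k ≤ j then (2 : ℚ)^j else 0) = 2^h - 2^k := by
  induction h, hk using Nat.le_induction with
  | base =>
    rw [Finset.sum_eq_zero]
    · ring
    · intro j hj
      rw [Finset.mem_range] at hj
      rw [if_neg (by omega)]
  | succ h hk ih =>
    rw [Finset.sum_range_succ, ih, if_pos hk]; ring

theorem halfpow_sub {s e : ℕ} (h : s ≤ e) : (1/2 : ℚ)^(e - s) = 2^s / 2^e := by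
  obtain ⟨d, rfl⟩ := Nat.exists_eq_add_of_le h
  rw [Nat.add_sub_cancel_left, pow_add, one_div, inv_pow]
  field_simp

theorem sum_wt (e h : ℕ) (he : 1 ≤ e) (heh : e ≤ h + 1) :
    ∑ j ∈ Finset.range (h+1), (if e ≤ j then (1/2 : ℚ)^(h - max j 1) else 0) = 2 - 2^e/2^h := by
  have : ∀ j ∈ Finset.range (h+1), (if e ≤ j then (1/2 : ℚ)^(h - max j 1) else 0) =
      (if e ≤ j then (2 : ℚ)^j else 0) / 2^h := by
    intro j hj
    rw [Finset.mem_range] at hj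
    split_ifs with hc
    · rw [max_eq_left (by omega), halfpow_sub (by omega)]
    · simp
  rw [Finset.sum_congr rfl this, ← Finset.sum_div, sum_two e _ heh]
  field_simp
  ring

theorem mach_231_312 : Mach (B2 B231 B312) I6 where
  irr := by simp only [B2, B231, B312]; omega
  inv := by
    intro f h hf p hp y hy x hx
    simp only [B2, B231, B312, hf p hp y hy, hf y hy p hp, hf x hx p hp, hf p hp x hx,
      hf x hx y hy, hf y hy x hx]
  start := ⟨_, J6.nil 0, by simp⟩
  zero := by
    rintro ρ W ⟨ρ0, hJ, -⟩
    cases hJ with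
    | nil => rfl
    | push _ s e ρ W hJ hse he => omega
  up := by
    rintro h ρ ρ' W ⟨ρ0, hJ, h3⟩ h4 h5
    refine ⟨ρ0, hJ.mono (by omega), ?_⟩
    intro a ha b hb
    by_cases ha' : a = h
    · subst ha'
      simp only [(h5 b).2, false_iff]
      intro h6; have := hJ.supp _ _ h6; omega
    · by_cases hb' : b = h
      · subst hb'
        simp only [(h5 a).1, false_iff]
        intro h6; have := hJ.supp _ _ h6; omega
      · rw [h4 a (by omega) b (by omega), h3 a (by omega) b (by omega)]
  down := by
    rintro h ρ W ⟨ρ0, hJ, h3⟩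
    generalize hH : h + 1 = H at hJ
    cases hJ with
    | nil =>
      subst hH
      refine ⟨fun j => (1/2)^(h - max j 1), ?_, ?_⟩
      · by_cases h0 : h = 0
        · subst h0; simp
        · have := sum_wt 1 h le_rfl (by omega)
          rw [Finset.sum_range_succ'] at this ⊢
          simp only [Nat.zero_max, Nat.le_add_left, if_true] at this ⊢
          rw [if_neg (by omega), add_zero] at this
          rw [this, if_neg h0, halfpow_sub (by omega)]
          ring
      · intro j hj
        right
        refine ⟨fun b hb => by rw [h3 j hj b hb]; simp, ?_⟩
        intro ρ' hρ'
        left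
        by_cases hjh : j < h
        · have hP := J6.push h j h _ _ (J6.nil j) hjh le_rfl
          rw [one_mul] at hP
          refine ⟨_, hP, ?_⟩
          intro a ha b hb
          rw [hρ' a ha b hb, h3 _ (skp_lt ha) _ (skp_lt hb)]
          simp only [B2, B231, B312, skp, false_or]
          split_ifs <;> omega
        · have : j = h := by omega
          subst this
          refine ⟨fun _ _ => False, ?_, ?_⟩
          · have h0 : j - max j 1 = 0 := by omega
            simp only [h0, pow_zero]; exact J6.nil j
          intro a ha b hb
          rw [hρ' a ha b hb, h3 _ (skp_lt ha) _ (skp_lt hb)]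
          simp only [B2, B231, B312, skp, false_or, iff_false]
          split_ifs <;> omega
    | push _ s e ρ1 W hJ hse he =>
      subst hH
      refine ⟨fun j => if j = s then W * (1/2)^(h - max s 1) else
        if e ≤ j then W * (1/2)^(e - max s 1) * (1/2)^(h - max j 1) else 0, ?_, ?_⟩
      · have hsplit : ∀ j ∈ Finset.range (h+1), (if j = s then W * (1/2)^(h - max s 1) else
          if e ≤ j then W * (1/2)^(e - max s 1) * (1/2)^(h - max j 1) else 0) =
          (if j = s then W * (1/2)^(h - max s 1) else 0) +
          W * (1/2)^(e - max s 1) * (if e ≤ j then (1/2)^(h - max j 1) else 0) := by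
          intro j hj
          by_cases h1 : j = s
          · rw [if_pos h1, if_pos h1, if_neg (by omega)]; ring
          · rw [if_neg h1, if_neg h1]
            split_ifs <;> ring
        rw [Finset.sum_congr rfl hsplit, Finset.sum_add_distrib, ← Finset.mul_sum,
          sum_wt e h (by omega) he, Finset.sum_ite_eq', if_pos (by simp; omega)]
        by_cases h0 : h = 0
        · subst h0
          have : s = 0 := by omega
          have : e = 1 := by omega
          subst s e
          norm_num
        · rw [if_neg h0, halfpow_sub (by omega), halfpow_sub (by omega)]
          field_simp
          ring
      · intro j hj
        have hsup := hJ.supp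
        by_cases hjs : j = s
        · right
          subst hjs
          refine ⟨fun b hb => ?_, ?_⟩
          · rw [h3 j hj b hb]
            rintro (h6 | h6)
            · have := hsup _ _ h6; omega
            · omega
          intro ρ' hρ'
          left
          simp only [if_true]
          by_cases hjh : j < h
          · refine ⟨_, J6.push h j h _ _ hJ hjh le_rfl, ?_⟩
            intro a ha b hb
            rw [hρ' a ha b hb, h3 _ (skp_lt ha) _ (skp_lt hb)]
            beta_reduce
            rw [skp_supp hsup le_rfl, or_assoc]
            apply or_congr Iff.rfl
            simp only [B2, B231, B312, skp]
            split_ifs <;> omega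
          · have : j = h := by omega
            subst this
            refine ⟨ρ1, ?_, ?_⟩
            · have h0 : j - max j 1 = 0 := by omega
              rw [h0, pow_zero, mul_one]; exact hJ
            intro a ha b hb
            rw [hρ' a ha b hb, h3 _ (skp_lt ha) _ (skp_lt hb)]
            beta_reduce
            rw [skp_supp hsup le_rfl, or_assoc]
            apply or_iff_left
            simp only [B2, B231, B312, skp]
            split_ifs <;> omega
        · by_cases hej : e ≤ j
          · right
            refine ⟨fun b hb => ?_, ?_⟩
            · rw [h3 j hj b hb]
              rintro (h6 | h6)
              · have := hsup _ _ h6; omega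
              · omega
            intro ρ' hρ'
            left
            simp only [if_neg hjs, if_pos hej]
            have hJ2 := J6.push j s e _ _ hJ hse hej
            have hsup2 := hJ2.supp
            by_cases hjh : j < h
            · refine ⟨_, J6.push h j h _ _ hJ2 hjh le_rfl, ?_⟩
              intro a ha b hb
              rw [hρ' a ha b hb, h3 _ (skp_lt ha) _ (skp_lt hb)]
              apply or_congr (skp_supp hsup2 le_rfl a b)
              simp only [B2, B231, B312, skp]
              split_ifs <;> omega
            · have : j = h := by omega
              subst this
              have h0 : j - max j 1 = 0 := by omega
              rw [h0, pow_zero, mul_one]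
              refine ⟨_, hJ2, ?_⟩
              intro a ha b hb
              rw [hρ' a ha b hb, h3 _ (skp_lt ha) _ (skp_lt hb)]
              refine Iff.trans (or_iff_left ?_) (skp_supp hsup2 le_rfl a b)
              simp only [B2, B231, B312, skp]
              split_ifs <;> omega
          · left
            refine ⟨by simp [hjs, hej], s, by omega, ?_⟩
            rw [h3 j hj s (by omega)]
            right
            omega

def ExB (B : ℕ → ℕ → ℕ → Prop) (M : Finset (ℕ × ℕ)) : Prop :=
  ∃ p p' y y' x x', (p, p') ∈ M ∧ (y, y') ∈ M ∧ (x, x') ∈ M ∧ p < p' ∧ y < p' ∧ x < p' ∧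
    p' < y' ∧ y' < x' ∧ B p y x

theorem sm6 {a b c d e f : ℕ} (h1 : a < b) (h2 : b < c) (h3 : c < d) (h4 : d < e) (h5 : e < f) :
    StrictMono (![a, b, c, d, e, f] : Fin (2 * 3) → ℕ) := by
  have : StrictMono (![a, b, c, d, e, f] : Fin (5 + 1) → ℕ) := by
    rw [Fin.strictMono_iff_lt_succ]
    intro i
    fin_cases i
    · exact h1
    · exact h2
    · exact h3
    · exact h4
    · exact h5
  exact this

theorem sm6' {f : Fin (2 * 3) → ℕ} (h : StrictMono f) :
    f 0 < f 1 ∧ f 1 < f 2 ∧ f 2 < f 3 ∧ f 3 < f 4 ∧ f 4 < f 5 :=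
  ⟨h (by decide), h (by decide), h (by decide), h (by decide), h (by decide)⟩

theorem cont_123 (M : Finset (ℕ × ℕ)) : MatchContains p123 M ↔ ExB B123 M := by
  constructor
  · rintro ⟨f, hf, h⟩
    have h0 : (f 0, f 5) ∈ M := h 0
    have h1 : (f 1, f 4) ∈ M := h 1
    have h2 : (f 2, f 3) ∈ M := h 2
    have := sm6' hf
    refine ⟨_, _, _, _, _, _, h2, h1, h0, ?_⟩
    unfold B123; omega
  · rintro ⟨p, p', y, y', x, x', hp, hy, hx, q1, q2, q3, q4, q5, q6, q7⟩
    refine ⟨_, sm6 (a := x) (b := y) (c := p) (d := p') (e := y') (f := x')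
      (by omega) (by omega) (by omega) (by omega) (by omega), ?_⟩
    intro a
    fin_cases a
    · exact hx
    · exact hy
    · exact hp

theorem cont_132 (M : Finset (ℕ × ℕ)) : MatchContains p132 M ↔ ExB B132 M := by
  constructor
  · rintro ⟨f, hf, h⟩
    have h0 : (f 0, f 5) ∈ M := h 0
    have h1 : (f 1, f 3) ∈ M := h 1
    have h2 : (f 2, f 4) ∈ M := h 2
    have := sm6' hf
    refine ⟨_, _, _, _, _, _, h1, h2, h0, ?_⟩
    unfold B132; omega
  · rintro ⟨p, p', y, y', x, x', hp, hy, hx, q1, q2, q3, q4, q5, q6, q7⟩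
    refine ⟨_, sm6 (a := x) (b := p) (c := y) (d := p') (e := y') (f := x')
      (by omega) (by omega) (by omega) (by omega) (by omega), ?_⟩
    intro a
    fin_cases a
    · exact hx
    · exact hp
    · exact hy

theorem cont_213 (M : Finset (ℕ × ℕ)) : MatchContains p213 M ↔ ExB B213 M := by
  constructor
  · rintro ⟨f, hf, h⟩
    have h0 : (f 0, f 4) ∈ M := h 0
    have h1 : (f 1, f 5) ∈ M := h 1
    have h2 : (f 2, f 3) ∈ M := h 2
    have := sm6' hf
    refine ⟨_, _, _, _, _, _, h2, h0, h1, ?_⟩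
    unfold B213; omega
  · rintro ⟨p, p', y, y', x, x', hp, hy, hx, q1, q2, q3, q4, q5, q6, q7⟩
    refine ⟨_, sm6 (a := y) (b := x) (c := p) (d := p') (e := y') (f := x')
      (by omega) (by omega) (by omega) (by omega) (by omega), ?_⟩
    intro a
    fin_cases a
    · exact hy
    · exact hx
    · exact hp

theorem cont_231 (M : Finset (ℕ × ℕ)) : MatchContains p231 M ↔ ExB B231 M := by
  constructor
  · rintro ⟨f, hf, h⟩
    have h0 : (f 0, f 4) ∈ M := h 0
    have h1 : (f 1, f 3) ∈ M := h 1
    have h2 : (f 2, f 5) ∈ M := h 2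
    have := sm6' hf
    refine ⟨_, _, _, _, _, _, h1, h0, h2, ?_⟩
    unfold B231; omega
  · rintro ⟨p, p', y, y', x, x', hp, hy, hx, q1, q2, q3, q4, q5, q6, q7⟩
    refine ⟨_, sm6 (a := y) (b := p) (c := x) (d := p') (e := y') (f := x')
      (by omega) (by omega) (by omega) (by omega) (by omega), ?_⟩
    intro a
    fin_cases a
    · exact hy
    · exact hp
    · exact hx

theorem cont_312 (M : Finset (ℕ × ℕ)) : MatchContains p312 M ↔ ExB B312 M := by
  constructor
  · rintro ⟨f, hf, h⟩
    have h0 : (f 0, f 3) ∈ M := h 0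
    have h1 : (f 1, f 5) ∈ M := h 1
    have h2 : (f 2, f 4) ∈ M := h 2
    have := sm6' hf
    refine ⟨_, _, _, _, _, _, h0, h2, h1, ?_⟩
    unfold B312; omega
  · rintro ⟨p, p', y, y', x, x', hp, hy, hx, q1, q2, q3, q4, q5, q6, q7⟩
    refine ⟨_, sm6 (a := p) (b := x) (c := y) (d := p') (e := y') (f := x')
      (by omega) (by omega) (by omega) (by omega) (by omega), ?_⟩
    intro a
    fin_cases a
    · exact hp
    · exact hx
    · exact hy

theorem cont_321 (M : Finset (ℕ × ℕ)) : MatchContains p321 M ↔ ExB B321 M := by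
  constructor
  · rintro ⟨f, hf, h⟩
    have h0 : (f 0, f 3) ∈ M := h 0
    have h1 : (f 1, f 4) ∈ M := h 1
    have h2 : (f 2, f 5) ∈ M := h 2
    have := sm6' hf
    refine ⟨_, _, _, _, _, _, h0, h1, h2, ?_⟩
    unfold B321; omega
  · rintro ⟨p, p', y, y', x, x', hp, hy, hx, q1, q2, q3, q4, q5, q6, q7⟩
    refine ⟨_, sm6 (a := p) (b := y) (c := x) (d := p') (e := y') (f := x')
      (by omega) (by omega) (by omega) (by omega) (by omega), ?_⟩
    intro a
    fin_cases a
    · exact hp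
    · exact hy
    · exact hx

def wOf (t : List Bool) (x : ℕ) : Bool := t.getD (x - 1) false

theorem shape_iff (n : ℕ) (M : Finset (ℕ × ℕ)) (t : List Bool) (ht : t.length = 2 * n) :
    shapeOf n M = t ↔ ∀ x, 1 ≤ x → x ≤ 2 * n → (wOf t x = true ↔ ∃ b, (x, b) ∈ M) := by
  constructor
  · rintro rfl x h1 h2
    obtain ⟨z, rfl⟩ : ∃ z, x = z + 1 := ⟨x - 1, by omega⟩
    unfold wOf
    rw [List.getD_eq_getElem _ _ (by omega)]
    simp [shapeOf]
  · intro h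
    apply List.ext_getElem
    · simp [shapeOf, ht]
    · intro z h1 h2
      have := h (z+1) (by omega) (by omega)
      unfold wOf at this
      rw [List.getD_eq_getElem _ _ (by omega)] at this
      simp only [Nat.add_sub_cancel] at this
      rw [Bool.eq_iff_iff, this]
      simp [shapeOf]

theorem set_eq (B B' : ℕ → ℕ → ℕ → Prop) (σ τ : Equiv.Perm (Fin 3))
    (hσ : ∀ M, MatchContains σ M ↔ ExB B M) (hτ : ∀ M, MatchContains τ M ↔ ExB B' M)
    (n : ℕ) (t : List Bool) (ht : t.length = 2 * n) (M : Finset (ℕ × ℕ)) :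
    (IsPerfectMatching n M ∧ MatchAvoids σ M ∧ MatchAvoids τ M ∧ shapeOf n M = t) ↔
      CC (B2 B B') (wOf t) (2 * n) 1 [] (fun _ _ => False) M := by
  unfold MatchAvoids
  rw [shape_iff n M t ht, hσ, hτ]
  constructor
  · rintro ⟨⟨h1, h2⟩, h3, h4, h5⟩
    have huniq : ∀ p ∈ M, ∀ q ∈ M, ∀ x, (p.1 = x ∨ p.2 = x) → (q.1 = x ∨ q.2 = x) → p = q := by
      intro p hp q hq x hpx hqx
      have := h1 p hp
      exact (h2 x (by omega) (by omega)).unique ⟨hp, hpx⟩ ⟨hq, hqx⟩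
    have hcl : ∀ a b, (a, b) ∈ M → wOf t b = false := by
      intro a b hab
      have q := h1 _ hab
      simp only at q
      rw [← Bool.not_eq_true, h5 b (by omega) (by omega)]
      rintro ⟨c, hc⟩
      have := huniq _ hab _ hc b (Or.inr rfl) (Or.inl rfl)
      have := congrArg Prod.fst this
      simp only at this
      omega
    constructor
    · intro a b hab
      have q := h1 _ hab
      simp only at q
      refine ⟨by omega, by omega, hcl a b hab, by omega, Or.inr ⟨by omega, ?_⟩⟩
      rw [h5 a (by omega) (by omega)]
      exact ⟨b, hab⟩
    · simp
    · intro a ha1 ha2 ha3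
      exact (h5 a ha1 (by omega)).1 ha3
    · intro b hb1 hb2 hb3
      obtain ⟨⟨a, c⟩, ⟨hac, h | h⟩, -⟩ := h2 b hb1 (by omega)
      · simp only at h
        subst h
        rw [(h5 a hb1 (by omega)).2 ⟨c, hac⟩] at hb3
        cases hb3
      · simp only at h
        subst h
        exact ⟨a, hac⟩
    · intro a b b' hb hb'
      exact congrArg Prod.snd (huniq _ hb _ hb' a (Or.inl rfl) (Or.inl rfl))
    · intro a a' b hb hb'
      exact congrArg Prod.fst (huniq _ hb _ hb' b (Or.inr rfl) (Or.inr rfl))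
    · simp
    · intro p p' y y' x x' hp hy hx q1 q2 q3 q4 q5
      have q := (h1 _ hp).1
      simp only at q
      rcases q5 with q5 | q5
      · exact h3 ⟨p, p', y, y', x, x', hp, hy, hx, q, q1, q2, q3, q4, q5⟩
      · exact h4 ⟨p, p', y, y', x, x', hp, hy, hx, q, q1, q2, q3, q4, q5⟩
  · intro h
    have hop : ∀ a b, (a, b) ∈ M → 1 ≤ a ∧ wOf t a = true := by
      intro a b hab
      obtain ⟨-, -, -, -, q | q⟩ := h.c1 a b hab
      · simp at q
      · exact q
    refine ⟨⟨?_, ?_⟩, ?_, ?_, ?_⟩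
    · rintro ⟨a, b⟩ hab
      have q := h.c1 a b hab
      have := hop a b hab
      refine ⟨q.2.2.2.1, this.1, ?_⟩
      simp only; omega
    · intro x hx1 hx2
      cases hw : wOf t x with
      | true =>
        obtain ⟨b, hb⟩ := h.c2' x hx1 (by omega) hw
        refine ⟨(x, b), ⟨hb, Or.inl rfl⟩, ?_⟩
        rintro ⟨c, d⟩ ⟨hcd, q | q⟩
        · simp only at q
          subst q
          rw [h.c4 _ _ _ hcd hb]
        · simp only at q
          subst q
          rw [(h.c1 _ _ hcd).2.2.1] at hw
          cases hw
      | false =>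
        obtain ⟨a, ha⟩ := h.c3 x hx1 (by omega) hw
        refine ⟨(a, x), ⟨ha, Or.inr rfl⟩, ?_⟩
        rintro ⟨c, d⟩ ⟨hcd, q | q⟩
        · simp only at q
          subst q
          rw [(hop _ _ hcd).2] at hw
          cases hw
        · simp only at q
          subst q
          rw [h.c4' _ _ _ hcd ha]
    · rintro ⟨p, p', y, y', x, x', hp, hy, hx, q, q1, q2, q3, q4, q5⟩
      exact h.c6 p p' y y' x x' hp hy hx q1 q2 q3 q4 (Or.inl q5)
    · rintro ⟨p, p', y, y', x, x', hp, hy, hx, q, q1, q2, q3, q4, q5⟩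
      exact h.c6 p p' y y' x x' hp hy hx q1 q2 q3 q4 (Or.inr q5)
    · intro x hx1 hx2
      constructor
      · intro hw
        exact h.c2' x hx1 (by omega) hw
      · rintro ⟨b, hb⟩
        exact (hop _ _ hb).2

theorem good_nn (n : ℕ) (t : List Bool) (ht : IsDyckPath n t) (m : ℕ) :
    ∀ c, c + m = 2 * n →
    GoodP (wOf t) m (c+1) ((t.take c).count true - (t.take c).count false) ∧
    NN (wOf t) m (c+1) ((t.take c).count true - (t.take c).count false) +
      (∑ i ∈ Finset.Ico c (2 * n), if (t[i]? = some false ∧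
        (t.take (i+1)).count true = (t.take (i+1)).count false) then 1 else 0) +
      (t.take c).count false = n := by
  obtain ⟨hl, hct, hpos⟩ := ht
  have hcf : t.count false = n := by
    have := List.count_true_add_count_false (l := t)
    omega
  induction m with
  | zero =>
    intro c hc
    have : t.take c = t := List.take_of_length_le (by omega)
    rw [this, hct, hcf]
    have : c = 2 * n := by omega
    subst this
    simp [GoodP, NN]
  | succ m ih =>
    intro c hc
    have hlt : c < t.length := by omega
    have htk : t.take (c+1) = t.take c ++ [t[c]] := by simp
    have hp := hpos c
    have hp' := hpos (c+1)
    have hI := ih (c+1) (by omega)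
    have hw : wOf t (c+1) = t[c] := by
      unfold wOf
      rw [Nat.add_sub_cancel, List.getD_eq_getElem _ _ hlt]
    rw [Finset.sum_eq_sum_Ico_succ_bot (by omega)]
    have hg : t[c]? = some t[c] := List.getElem?_eq_getElem hlt
    simp only [GoodP, NN, hw]
    cases hb : t[c] with
    | true =>
      rw [htk, hb] at hI hp'
      simp only [List.count_append, List.count_singleton, hg, hb] at hI hp' ⊢
      simp only [beq_self_eq_true, if_true, Bool.false_eq_true, Bool.true_eq_false, if_false, beq_iff_eq, Option.some.injEq, false_and, add_zero, zero_add] at hI hp' ⊢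
      rw [show (List.take c t).count true + 1 - (List.take c t).count false =
        (List.take c t).count true - (List.take c t).count false + 1 by omega] at hI
      exact hI
    | false =>
      rw [htk, hb] at hp'
      have hIa := hI.1
      have hIb := hI.2
      have e1 : (t.take (c+1)).count true = (t.take c).count true := by
        rw [htk, hb]; simp [List.count_append]
      have e2 : (t.take (c+1)).count false = (t.take c).count false + 1 := by
        rw [htk, hb]; simp [List.count_append]
      have hpp := hpos (c+1)
      rw [e1, e2] at hIa hIb hpp
      rw [Nat.sub_add_eq] at hIa hIb
      simp only [Bool.false_eq_true, if_false, hg, hb, e1, e2, true_and]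
      refine ⟨⟨by omega, hIa⟩, ?_⟩
      split_ifs <;> omega

theorem direct (B B' : ℕ → ℕ → ℕ → Prop) (I : ℕ → (ℕ → ℕ → Prop) → ℚ → Prop)
    (hM : Mach (B2 B B') I) (σ τ : Equiv.Perm (Fin 3))
    (hσ : ∀ M, MatchContains σ M ↔ ExB B M) (hτ : ∀ M, MatchContains τ M ↔ ExB B' M)
    (n : ℕ) (t : List Bool) (ht : IsDyckPath n t) :
    {M : Finset (ℕ × ℕ) | IsPerfectMatching n M ∧ MatchAvoids σ M ∧ MatchAvoids τ M ∧
        shapeOf n M = t}.ncard = 2 ^ (n - returnsOf t) := by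
  have hset : {M : Finset (ℕ × ℕ) | IsPerfectMatching n M ∧ MatchAvoids σ M ∧ MatchAvoids τ M ∧
        shapeOf n M = t} = ↑(GG (B2 B B') (wOf t) (2 * n) 1 [] (fun _ _ => False)) := by
    ext M
    rw [Set.mem_ofPred_eq, set_eq B B' σ τ hσ hτ n t ht.1, Finset.mem_coe, mem_GG _ hM.irr]
    · simp
    · simp
    · simp
    · simp
  rw [hset, Set.ncard_coe_finset]
  obtain ⟨hg, hn⟩ := good_nn n t ht (2 * n) 0 (by omega)
  simp only [List.take_zero, List.count_nil, Nat.sub_zero, zero_add, add_zero] at hg hn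
  have hc := card_GG hM (wOf t) (2 * n) 1 [] (fun _ _ => False) 1 (by simp) (by simp) (by simp)
    (by simp) hg hM.start
  have hr : NN (wOf t) (2 * n) 1 0 = n - returnsOf t := by
    unfold returnsOf
    rw [Finset.card_filter, ht.1, Finset.range_eq_Ico]
    omega
  simp only [List.length_nil, mul_one, hr] at hc
  exact_mod_cast hc

def rvp (n : ℕ) (p : ℕ × ℕ) : ℕ × ℕ := (2 * n + 1 - p.2, 2 * n + 1 - p.1)

def rvM (n : ℕ) (M : Finset (ℕ × ℕ)) : Finset (ℕ × ℕ) := M.image (rvp n)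

def Bdd (n : ℕ) (M : Finset (ℕ × ℕ)) : Prop := ∀ p ∈ M, p.1 < p.2 ∧ 1 ≤ p.1 ∧ p.2 ≤ 2 * n

theorem rvM_bdd {n M} (h : Bdd n M) : Bdd n (rvM n M) := by
  intro p hp
  simp only [rvM, Finset.mem_image] at hp
  obtain ⟨q, hq, rfl⟩ := hp
  have := h q hq
  simp only [rvp]
  omega

theorem mem_rvM {n M} (h : Bdd n M) {a b : ℕ} (hab : (a, b) ∈ M) :
    (2 * n + 1 - b, 2 * n + 1 - a) ∈ rvM n M := Finset.mem_image_of_mem (rvp n) hab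

theorem mem_rvM' {n M} (h : Bdd n M) {a b : ℕ} (hab : (a, b) ∈ rvM n M) :
    (2 * n + 1 - b, 2 * n + 1 - a) ∈ M := by
  simp only [rvM, Finset.mem_image] at hab
  obtain ⟨⟨c, d⟩, hq, he⟩ := hab
  have := h _ hq
  simp only [rvp, Prod.mk.injEq] at he this
  have h1 : 2 * n + 1 - b = c := by omega
  have h2 : 2 * n + 1 - a = d := by omega
  rw [h1, h2]; exact hq

theorem rvM_rvM {n M} (h : Bdd n M) : rvM n (rvM n M) = M := by
  ext ⟨a, b⟩
  constructor
  · intro hab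
    have q := rvM_bdd (rvM_bdd h) _ hab
    have := mem_rvM' h (mem_rvM' (rvM_bdd h) hab)
    simp only at q
    rwa [show 2 * n + 1 - (2 * n + 1 - a) = a by omega,
      show 2 * n + 1 - (2 * n + 1 - b) = b by omega] at this
  · intro hab
    have q := h _ hab
    have := mem_rvM (rvM_bdd h) (mem_rvM h hab)
    simp only at q
    rw [show 2 * n + 1 - (2 * n + 1 - a) = a by omega,
      show 2 * n + 1 - (2 * n + 1 - b) = b by omega] at this
    exact this

def RevB (B B' : ℕ → ℕ → ℕ → Prop) : Prop := ∀ n M, Bdd n M → ExB B M → ExB B' (rvM n M)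

theorem rev_132 : RevB B132 B132 := by
  rintro n M h ⟨p, p', y, y', x, x', hp, hy, hx, q⟩
  have := h _ hp
  have := h _ hy
  have := h _ hx
  unfold B132 at q
  refine ⟨_, _, _, _, _, _, mem_rvM h hy, mem_rvM h hp, mem_rvM h hx, ?_⟩
  simp only [B132] at *; omega

theorem rev_213 : RevB B213 B213 := by
  rintro n M h ⟨p, p', y, y', x, x', hp, hy, hx, q⟩
  have := h _ hp
  have := h _ hy
  have := h _ hx
  unfold B213 at q
  refine ⟨_, _, _, _, _, _, mem_rvM h hp, mem_rvM h hx, mem_rvM h hy, ?_⟩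
  simp only [B213] at *; omega

theorem rev_231 : RevB B231 B312 := by
  rintro n M h ⟨p, p', y, y', x, x', hp, hy, hx, q⟩
  have := h _ hp
  have := h _ hy
  have := h _ hx
  unfold B231 at q
  refine ⟨_, _, _, _, _, _, mem_rvM h hx, mem_rvM h hp, mem_rvM h hy, ?_⟩
  simp only [B312] at *; omega

theorem rev_312 : RevB B312 B231 := by
  rintro n M h ⟨p, p', y, y', x, x', hp, hy, hx, q⟩
  have := h _ hp
  have := h _ hy
  have := h _ hx
  unfold B312 at q
  refine ⟨_, _, _, _, _, _, mem_rvM h hy, mem_rvM h hx, mem_rvM h hp, ?_⟩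
  simp only [B231] at *; omega

theorem rev_321 : RevB B321 B321 := by
  rintro n M h ⟨p, p', y, y', x, x', hp, hy, hx, q⟩
  have := h _ hp
  have := h _ hy
  have := h _ hx
  unfold B321 at q
  refine ⟨_, _, _, _, _, _, mem_rvM h hx, mem_rvM h hy, mem_rvM h hp, ?_⟩
  simp only [B321] at *; omega

def rvT (t : List Bool) : List Bool := (t.map not).reverse

theorem rvT_rvT (t : List Bool) : rvT (rvT t) = t := by
  simp [rvT, Function.comp_def]

theorem rvT_length (t : List Bool) : (rvT t).length = t.length := by simp [rvT]

theorem wOf_rvT (n : ℕ) (t : List Bool) (ht : t.length = 2 * n) (x : ℕ) (h1 : 1 ≤ x)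
    (h2 : x ≤ 2 * n) : wOf (rvT t) x = !(wOf t (2 * n + 1 - x)) := by
  unfold wOf
  rw [List.getD_eq_getElem _ _ (by rw [rvT_length]; omega), List.getD_eq_getElem _ _ (by omega)]
  simp only [rvT, List.getElem_reverse, List.getElem_map, List.length_map, ht]
  congr 2
  omega

theorem pm_rv {n M} (h : IsPerfectMatching n M) : IsPerfectMatching n (rvM n M) := by
  have hb : Bdd n M := h.1
  refine ⟨rvM_bdd hb, ?_⟩
  intro x hx1 hx2
  obtain ⟨⟨a, b⟩, ⟨hab, hx⟩, hu⟩ := h.2 (2 * n + 1 - x) (by omega) (by omega)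
  have q := hb _ hab
  simp only at hx q
  refine ⟨(2 * n + 1 - b, 2 * n + 1 - a), ⟨mem_rvM hb hab, ?_⟩, ?_⟩
  · simp only; omega
  · rintro ⟨c, d⟩ ⟨hcd, hx'⟩
    have q' := rvM_bdd hb _ hcd
    have := hu (2 * n + 1 - d, 2 * n + 1 - c) ⟨mem_rvM' hb hcd, by simp only at *; omega⟩
    simp only [Prod.mk.injEq] at this q' ⊢
    omega

theorem shape_rv {n M} {t : List Bool} (ht : t.length = 2 * n) (h : IsPerfectMatching n M)
    (hs : shapeOf n M = t) : shapeOf n (rvM n M) = rvT t := by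
  have hb : Bdd n M := h.1
  rw [shape_iff n _ _ ht] at hs
  rw [shape_iff n _ _ (by rw [rvT_length]; exact ht)]
  intro x hx1 hx2
  rw [wOf_rvT n t ht x hx1 hx2, Bool.not_eq_true', ← Bool.not_eq_true,
    hs _ (by omega) (by omega)]
  obtain ⟨⟨a, b⟩, ⟨hab, hx⟩, hu⟩ := h.2 (2 * n + 1 - x) (by omega) (by omega)
  have q := hb _ hab
  simp only at hx q
  constructor
  · intro hno
    rcases hx with hx | hx
    · exact absurd ⟨b, by rw [← hx]; exact hab⟩ hno
    · refine ⟨2 * n + 1 - a, ?_⟩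
      have := mem_rvM hb hab
      rwa [hx, show 2 * n + 1 - (2 * n + 1 - x) = x by omega] at this
  · rintro ⟨c, hc⟩ ⟨d, hd⟩
    have h1 := mem_rvM' hb hc
    have e1 := hu _ ⟨h1, Or.inr rfl⟩
    have e2 := hu _ ⟨hd, Or.inl rfl⟩
    have q1 := hb _ h1
    have q2 := hb _ hd
    simp only [Prod.mk.injEq] at e1 e2 q1 q2
    omega

theorem count_map_not (l : List Bool) (b : Bool) : (l.map not).count b = l.count (!b) := by
  induction l with
  | nil => simp
  | cons a l ih => simp only [List.map_cons, List.count_cons, ih]; cases a <;> cases b <;> simp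

theorem take_rvT (n : ℕ) (t : List Bool) (ht : t.length = 2 * n) (i : ℕ) (b : Bool) :
    ((rvT t).take i).count b + (t.take (2 * n - i)).count (!b) = t.count (!b) := by
  rw [rvT, List.take_reverse, List.count_reverse, List.length_map, ht, ← List.map_drop,
    count_map_not, add_comm, ← List.count_append, List.take_append_drop]

theorem dyck_false {n t} (ht : IsDyckPath n t) : t.count false = n := by
  have := List.count_true_add_count_false (l := t)
  have := ht.1
  have := ht.2.1
  omega

theorem dyck_rv {n t} (ht : IsDyckPath n t) : IsDyckPath n (rvT t) := by
  have hf := dyck_false ht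
  refine ⟨by rw [rvT_length]; exact ht.1, ?_, ?_⟩
  · rw [rvT, List.count_reverse, count_map_not]; exact hf
  · intro i
    have h1 := take_rvT n t ht.1 i true
    have h2 := take_rvT n t ht.1 i false
    have h3 := ht.2.2 (2 * n - i)
    have h4 := ht.2.1
    simp only [Bool.not_true, Bool.not_false] at h1 h2
    omega

theorem returns_eq {n t} (ht : IsDyckPath n t) : returnsOf t + 1 =
    ∑ i ∈ Finset.range (2 * n + 1),
      if (t.take i).count true = (t.take i).count false then 1 else 0 := by
  rw [Finset.sum_range_succ']
  simp only [List.take_zero, List.count_nil, if_true]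
  congr 1
  unfold returnsOf
  rw [Finset.card_filter, ht.1]
  apply Finset.sum_congr rfl
  intro i hi
  rw [Finset.mem_range] at hi
  have hlt : i < t.length := by have := ht.1; omega
  have htk : t.take (i+1) = t.take i ++ [t[i]] := by simp
  have hg : t[i]? = some t[i] := List.getElem?_eq_getElem hlt
  cases hb : t[i] with
  | false => simp [hg, hb]
  | true =>
    rw [hg, hb, htk, hb]
    have := ht.2.2 i
    simp only [List.count_append, List.count_singleton]
    simp
    omega

theorem returns_rv {n t} (ht : IsDyckPath n t) : returnsOf (rvT t) = returnsOf t := by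
  have h1 := returns_eq ht
  have h2 := returns_eq (dyck_rv ht)
  rw [← Finset.sum_range_reflect] at h1
  have : returnsOf (rvT t) + 1 = returnsOf t + 1 := by
    rw [h1, h2]
    apply Finset.sum_congr rfl
    intro i hi
    have h1 := take_rvT n t ht.1 i true
    have h2 := take_rvT n t ht.1 i false
    have h4 := ht.2.1
    have hf := dyck_false ht
    simp only [Bool.not_true, Bool.not_false] at h1 h2
    rw [show 2 * n + 1 - 1 - i = 2 * n - i by omega]
    congr 1
    rw [eq_iff_iff]
    omega
  omega

theorem maps_rv {A A' C C' : ℕ → ℕ → ℕ → Prop} {σ σ' τ τ' : Equiv.Perm (Fin 3)}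
    (hσ : ∀ M, MatchContains σ M ↔ ExB A M) (hτ : ∀ M, MatchContains τ M ↔ ExB C M)
    (hσ' : ∀ M, MatchContains σ' M ↔ ExB A' M) (hτ' : ∀ M, MatchContains τ' M ↔ ExB C' M)
    (h1 : RevB A' A) (h2 : RevB C' C) {n : ℕ} {t : List Bool} (ht : t.length = 2 * n)
    {M : Finset (ℕ × ℕ)}
    (h : IsPerfectMatching n M ∧ MatchAvoids σ M ∧ MatchAvoids τ M ∧ shapeOf n M = t) :
    IsPerfectMatching n (rvM n M) ∧ MatchAvoids σ' (rvM n M) ∧ MatchAvoids τ' (rvM n M) ∧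
      shapeOf n (rvM n M) = rvT t := by
  obtain ⟨p, q, r, s⟩ := h
  have hb : Bdd n M := p.1
  unfold MatchAvoids at *
  rw [hσ] at q
  rw [hτ] at r
  rw [hσ', hτ']
  refine ⟨pm_rv p, fun hc => q ?_, fun hc => r ?_, shape_rv ht p s⟩
  · have := h1 n _ (rvM_bdd hb) hc
    rwa [rvM_rvM hb] at this
  · have := h2 n _ (rvM_bdd hb) hc
    rwa [rvM_rvM hb] at this

theorem reversed {A A' C C' : ℕ → ℕ → ℕ → Prop} {σ σ' τ τ' : Equiv.Perm (Fin 3)}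
    (hσ : ∀ M, MatchContains σ M ↔ ExB A M) (hτ : ∀ M, MatchContains τ M ↔ ExB C M)
    (hσ' : ∀ M, MatchContains σ' M ↔ ExB A' M) (hτ' : ∀ M, MatchContains τ' M ↔ ExB C' M)
    (h1 : RevB A' A) (h2 : RevB C' C) (h3 : RevB A A') (h4 : RevB C C')
    (I : ℕ → (ℕ → ℕ → Prop) → ℚ → Prop)
    (hM : Mach (B2 A' C') I) (n : ℕ) (t : List Bool) (ht : IsDyckPath n t) :
    {M : Finset (ℕ × ℕ) | IsPerfectMatching n M ∧ MatchAvoids σ M ∧ MatchAvoids τ M ∧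
        shapeOf n M = t}.ncard = 2 ^ (n - returnsOf t) := by
  rw [← returns_rv ht, ← direct A' C' I hM σ' τ' hσ' hτ' n (rvT t) (dyck_rv ht)]
  apply Set.ncard_congr (fun M _ => rvM n M)
  · intro M h
    exact maps_rv hσ hτ hσ' hτ' h1 h2 ht.1 h
  · intro M N hM hN he
    rw [← rvM_rvM (n := n) (M := M) hM.1.1, ← rvM_rvM (n := n) (M := N) hN.1.1, he]
  · intro N hN
    have := maps_rv hσ' hτ' hσ hτ h3 h4 (by rw [rvT_length]; exact ht.1) hN
    rw [rvT_rvT] at this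
    exact ⟨rvM n N, this, rvM_rvM hN.1.1⟩

/-- For every pair `{σ,τ}` in class I, every positive `n` and every
Ferrers board `F ∈ F_n` (with border path `t`), `|M_F(σ,τ)| = 2^{n − r(F)}`;
in particular all nine pairs are shape-Wilf-equivalent. -/
theorem card_matchings_classI_eq_two_pow
    (σ τ : Equiv.Perm (Fin 3)) (h : ClassIPair σ τ)
    (n : ℕ) (hn : 0 < n) (t : List Bool) (ht : IsDyckPath n t) :
    {M : Finset (ℕ × ℕ) | IsPerfectMatching n M ∧ MatchAvoids σ M ∧ MatchAvoids τ M ∧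
        shapeOf n M = t}.ncard = 2 ^ (n - returnsOf t) := by
  rcases h with ⟨rfl, rfl⟩ | ⟨rfl, rfl⟩ | ⟨rfl, rfl⟩ | ⟨rfl, rfl⟩ | ⟨rfl, rfl⟩ | ⟨rfl, rfl⟩ |
    ⟨rfl, rfl⟩ | ⟨rfl, rfl⟩ | ⟨rfl, rfl⟩
  · exact direct _ _ _ mach_123_213 _ _ cont_123 cont_213 n t ht
  · exact direct _ _ _ mach_132_213 _ _ cont_132 cont_213 n t ht
  · exact direct _ _ _ mach_132_231 _ _ cont_132 cont_231 n t ht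
  · exact reversed cont_132 cont_312 cont_132 cont_231 rev_132 rev_231 rev_132 rev_312 _
      mach_132_231 n t ht
  · exact direct _ _ _ mach_213_231 _ _ cont_213 cont_231 n t ht
  · exact reversed cont_213 cont_312 cont_213 cont_231 rev_213 rev_231 rev_213 rev_312 _
      mach_213_231 n t ht
  · exact direct _ _ _ mach_231_312 _ _ cont_231 cont_312 n t ht
  · exact reversed cont_231 cont_321 cont_312 cont_321 rev_312 rev_321 rev_231 rev_321 _
      mach_312_321 n t ht
  · exact direct _ _ _ mach_312_321 _ _ cont_312 cont_321 n t ht
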